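/- arXiv:math-ph/0511024 — 13 statements merged into one kernel-verified Lean document; each statement's English description precedes it below -/
import Mathlib

section
/- Let p, q ≥ 1 be integers and let N ≥ max(p, q) be an integer. Let φ_1, …, φ_{p+q} be complex numbers with Re φ_j < 0 for 1 ≤ j ≤ p and Re φ_l > 0 for p+1 ≤ l ≤ p+q. Then ∫_{U(N)} ∏_{j=1}^{p} det(1_N − e^{φ_j} u)^{-1} · ∏_{l=p+1}^{p+q} det(e^{φ_l}·1_N − ū)^{-1} du = e^{−N·∑_{l=p+1}^{p+q} φ_l} · ∏_{j=1}^{p} ∏_{l=p+1}^{p+q} (1 − e^{φ_j − φ_l})^{-1}. -/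
open MeasureTheory Matrix

noncomputable instance (N : ℕ) : MeasurableSpace (Matrix.unitaryGroup (Fin N) ℂ) := borel _
instance (N : ℕ) : BorelSpace (Matrix.unitaryGroup (Fin N) ℂ) := ⟨rfl⟩

set_option linter.unusedSectionVars false

lemma circle_inf : {z : ℂ | ‖z‖ = 1}.Infinite := by
  have : (Metric.sphere (0:ℂ) 1).Infinite := by
    have h := (Circle.exp : ℝ → Circle)
    have h2 : Set.InjOn (fun t : ℝ => Complex.exp (t * Complex.I)) (Set.Ioo (-Real.pi) Real.pi) := by
      intro a ha b hb hab
      have e := congrArg Complex.arg hab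
      simpa [Complex.arg_exp_mul_I, toIocMod_eq_self Real.two_pi_pos |>.2 (show a ∈ Set.Ioc (-Real.pi) (-Real.pi + 2 * Real.pi) from ⟨ha.1, by linarith [ha.2]⟩), toIocMod_eq_self Real.two_pi_pos |>.2 (show b ∈ Set.Ioc (-Real.pi) (-Real.pi + 2 * Real.pi) from ⟨hb.1, by linarith [hb.2]⟩)] using e
    have h3 : (Set.Ioo (-Real.pi) Real.pi).Infinite := Set.Ioo_infinite (by linarith [Real.pi_pos])
    refine (h3.image h2).mono ?_
    rintro _ ⟨t, -, rfl⟩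
    simp [Complex.norm_exp_ofReal_mul_I]
  refine this.mono ?_
  intro z hz
  simpa using hz

lemma exists_phase {N : ℕ} (u : Matrix (Fin N) (Fin N) ℂ) :
    ∃ c : ℂ, ‖c‖ = 1 ∧ IsUnit (1 + c • u) := by
  set P : Polynomial ℂ := Matrix.det (1 + (Polynomial.X : Polynomial ℂ) • u.map Polynomial.C) with hP
  have hev : ∀ c, P.eval c = Matrix.det (1 + c • u) := by
    intro c
    rw [hP, ← Polynomial.coe_evalRingHom, RingHom.map_det]
    congr 1
    ext i j
    by_cases h : i = j <;> simp [h] <;> ring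
  have hne : P ≠ 0 := by
    intro h
    have := hev 0
    simp [h] at this
  have hfin : {c | P.IsRoot c}.Finite := by
    by_contra hc
    exact hne (Polynomial.eq_zero_of_infinite_isRoot P hc)
  obtain ⟨c, hc, hc'⟩ := (circle_inf.sdiff hfin).nonempty
  refine ⟨c, hc, ?_⟩
  rw [Matrix.isUnit_iff_isUnit_det, ← hev]
  exact isUnit_iff_ne_zero.2 hc'

lemma herm_diag {N : ℕ} (H : Matrix (Fin N) (Fin N) ℂ) (hH : H.IsHermitian) :
    ∃ (V : Matrix.unitaryGroup (Fin N) ℂ) (e : Fin N → ℝ),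
      H = (V : Matrix (Fin N) (Fin N) ℂ) * diagonal (fun i => (e i : ℂ)) * star (V : Matrix (Fin N) (Fin N) ℂ) := by
  refine ⟨hH.eigenvectorUnitary, hH.eigenvalues, ?_⟩
  have := hH.spectral_theorem
  rw [Unitary.conjStarAlgAut_apply] at this
  exact this

lemma unitary_diag {N : ℕ} (u : Matrix.unitaryGroup (Fin N) ℂ) :
    ∃ (V : Matrix.unitaryGroup (Fin N) ℂ) (d : Fin N → ℂ), (∀ i, ‖d i‖ = 1) ∧
      (u : Matrix (Fin N) (Fin N) ℂ) = (V : Matrix (Fin N) (Fin N) ℂ) * diagonal d * star (V : Matrix (Fin N) (Fin N) ℂ) := by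
  obtain ⟨c, hc, K', hK'⟩ := exists_phase (u : Matrix (Fin N) (Fin N) ℂ)
  have hcc : c * star c = 1 := by
    have := Complex.mul_conj c
    simp [Complex.normSq_eq_norm_sq, hc] at this
    simpa using this
  set w : Matrix (Fin N) (Fin N) ℂ := c • (u : Matrix (Fin N) (Fin N) ℂ) with hw
  have hww : star w * w = 1 := by
    rw [hw, star_smul, smul_mul_smul_comm, Unitary.coe_star_mul_self, mul_comm, hcc, one_smul]
  set K : Matrix (Fin N) (Fin N) ℂ := ((K'⁻¹ : (Matrix (Fin N) (Fin N) ℂ)ˣ) : Matrix (Fin N) (Fin N) ℂ)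
  have hK1 : K * (1 + w) = 1 := by rw [← hK']; exact Units.inv_mul _
  have hK2 : (1 + w) * K = 1 := by rw [← hK']; exact Units.mul_inv _
  have hK3 : star K * (1 + star w) = 1 := by
    have := congrArg star hK2
    simpa using this
  have hK4 : (1 + star w) * star K = 1 := by
    have := congrArg star hK1
    simpa using this
  set H : Matrix (Fin N) (Fin N) ℂ := Complex.I • ((1 - w) * K) with hHdef
  have key : -(star K * (1 - star w)) = (1 - w) * K := by
    have h1 : -((1 - star w) * (1 + w)) = (1 + star w) * (1 - w) := by
      simp only [mul_add, mul_sub, add_mul, sub_mul, hww, one_mul, mul_one]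
      abel
    calc -(star K * (1 - star w)) = star K * (-((1 - star w) * (1 + w))) * K := by
          rw [mul_neg, neg_mul, mul_assoc, mul_assoc, hK2, mul_one]
      _ = (1 - w) * K := by
          rw [h1, ← mul_assoc, hK3, one_mul]
  have hH : H.IsHermitian := by
    show star H = H
    rw [hHdef, star_smul, star_mul, star_sub, star_one, ← key]
    simp
  obtain ⟨V, e, hVe⟩ := herm_diag H hH
  have hHw : H * (1 + w) = Complex.I • (1 - w) := by
    rw [hHdef, smul_mul_assoc, mul_assoc, hK1, mul_one]
  set w' := star (V : Matrix (Fin N) (Fin N) ℂ) * w * (V : Matrix (Fin N) (Fin N) ℂ) with hw'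
  have hV1 : star (V : Matrix (Fin N) (Fin N) ℂ) * (V : Matrix (Fin N) (Fin N) ℂ) = 1 := Unitary.coe_star_mul_self V
  have hV2 : (V : Matrix (Fin N) (Fin N) ℂ) * star (V : Matrix (Fin N) (Fin N) ℂ) = 1 := Unitary.coe_mul_star_self V
  have h5 : diagonal (fun i => (e i : ℂ)) * (1 + w') = Complex.I • (1 - w') := by
    have := congrArg (fun M => star (V : Matrix (Fin N) (Fin N) ℂ) * M * (V : Matrix (Fin N) (Fin N) ℂ)) hHw
    simp only [hVe] at this
    have l : star (V : Matrix (Fin N) (Fin N) ℂ) * ((V : Matrix (Fin N) (Fin N) ℂ) * diagonal (fun i => (e i : ℂ)) * star (V : Matrix (Fin N) (Fin N) ℂ) * (1 + w)) * (V : Matrix (Fin N) (Fin N) ℂ) = diagonal (fun i => (e i : ℂ)) * (1 + w') := by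
      rw [hw', mul_add, mul_add, mul_add, add_mul]
      simp only [← mul_assoc, hV1, one_mul, mul_one]
      rw [mul_assoc _ (star (V : Matrix (Fin N) (Fin N) ℂ)) (V : Matrix (Fin N) (Fin N) ℂ), hV1, mul_one]
    rw [← l, this, hw', mul_smul_comm, smul_mul_assoc, mul_sub, sub_mul, mul_one, hV1]
  have h6 : w' = diagonal (fun i => (Complex.I - e i) / (e i + Complex.I)) := by
    ext i j
    have h7 := congrFun (congrFun h5 i) j
    rw [diagonal_mul] at h7
    have hne : (e i : ℂ) + Complex.I ≠ 0 := by
      intro h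
      have := congrArg Complex.im h
      simp at this
    by_cases hij : i = j
    · subst hij
      simp at h7 ⊢
      rw [eq_div_iff hne]
      linear_combination h7
    · simp [hij] at h7 ⊢
      have : ((e i : ℂ) + Complex.I) * w' i j = 0 := by linear_combination h7
      exact (mul_eq_zero.1 this).resolve_left hne
  refine ⟨V, fun i => star c * ((Complex.I - e i) / (e i + Complex.I)), ?_, ?_⟩
  · intro i
    rw [norm_mul, norm_star, hc, one_mul, norm_div]
    have : ‖Complex.I - e i‖ = ‖(e i : ℂ) + Complex.I‖ := by
      rw [Complex.norm_def, Complex.norm_def]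
      simp [Complex.normSq_apply]
    rw [this, div_self]
    intro h
    have := congrArg Complex.im (norm_eq_zero.1 h)
    simp at this
  · have h8 : diagonal (fun i => star c * ((Complex.I - e i) / (e i + Complex.I))) = star c • w' := by
      rw [h6, ← diagonal_smul]; rfl
    rw [h8, hw', hw]
    simp only [mul_smul_comm, smul_mul_assoc, smul_smul]
    rw [mul_comm (star c), hcc, one_smul]
    simp only [← mul_assoc, hV2, one_mul]
    rw [mul_assoc, hV2, mul_one]

/-- Zariski density of the unitary group. -/
lemma zariski {N : ℕ} (P : MvPolynomial (Fin N × Fin N) ℂ)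
    (hP : ∀ u : Matrix.unitaryGroup (Fin N) ℂ,
      MvPolynomial.eval (fun s => (u : Matrix (Fin N) (Fin N) ℂ) s.1 s.2) P = 0) : P = 0 := by
  have h1 : ∀ H : Matrix (Fin N) (Fin N) ℂ, H.IsHermitian →
      MvPolynomial.eval (fun s => H s.1 s.2) P = 0 := by
    intro H hH
    obtain ⟨V, e, rfl⟩ := herm_diag H hH
    set Q : MvPolynomial (Fin N) ℂ := MvPolynomial.aeval
      (fun s : Fin N × Fin N => ∑ k, MvPolynomial.C ((V : Matrix (Fin N) (Fin N) ℂ) s.1 k) * MvPolynomial.X k *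
        MvPolynomial.C (star (V : Matrix (Fin N) (Fin N) ℂ) k s.2)) P with hQ
    have hQe : ∀ d : Fin N → ℂ, MvPolynomial.eval d Q = MvPolynomial.eval (fun s => ((V : Matrix (Fin N) (Fin N) ℂ) * diagonal d * star (V : Matrix (Fin N) (Fin N) ℂ)) s.1 s.2) P := by
      intro d
      rw [hQ, MvPolynomial.aeval_def, MvPolynomial.algebraMap_eq, ← MvPolynomial.coe_eval₂Hom, ← RingHom.comp_apply]
      congr 1
      apply MvPolynomial.ringHom_ext
      · intro r; simp
      · rintro ⟨i, j⟩
        simp [Matrix.mul_apply, Matrix.diagonal_apply]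
    have hQ0 : Q = 0 := by
      apply MvPolynomial.funext_set (fun _ => {z : ℂ | ‖z‖ = 1}) (fun _ => circle_inf)
      intro d hd
      have hD : diagonal d ∈ Matrix.unitaryGroup (Fin N) ℂ := by
        rw [Matrix.mem_unitaryGroup_iff, star_eq_conjTranspose, diagonal_conjTranspose, diagonal_mul_diagonal, ← diagonal_one]
        congr 1
        ext i
        have h := hd i trivial
        have := Complex.mul_conj (d i)
        rw [Complex.normSq_eq_norm_sq, show ‖d i‖ = 1 from h] at this
        simpa using this
      rw [hQe]
      simpa using hP (V * ⟨diagonal d, hD⟩ * star V)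
    rw [← hQe, hQ0, map_zero]
  apply MvPolynomial.funext
  intro z
  obtain ⟨M, hM⟩ : ∃ M : Matrix (Fin N) (Fin N) ℂ, ∀ i j, M i j = z (i, j) := ⟨fun i j => z (i, j), fun _ _ => rfl⟩
  set A : Matrix (Fin N) (Fin N) ℂ := (1/2 : ℂ) • (M + star M) with hA
  set B : Matrix (Fin N) (Fin N) ℂ := (-Complex.I/2 : ℂ) • (M - star M) with hB
  have hAh : A.IsHermitian := by
    show star A = A
    rw [hA, star_smul, star_add, star_star, add_comm]
    simp
  have hBh : B.IsHermitian := by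
    show star B = B
    rw [hB, star_smul, star_sub, star_star, ← neg_sub, smul_neg, ← neg_smul]
    simp [neg_div]
  set Q : Polynomial ℂ := MvPolynomial.aeval (fun s : Fin N × Fin N => Polynomial.C (A s.1 s.2) + Polynomial.X * Polynomial.C (B s.1 s.2)) P with hQ
  have hQe : ∀ t : ℂ, Polynomial.eval t Q = MvPolynomial.eval (fun s => (A + t • B) s.1 s.2) P := by
    intro t
    rw [hQ, MvPolynomial.aeval_def, ← MvPolynomial.coe_eval₂Hom, ← Polynomial.coe_evalRingHom, ← RingHom.comp_apply]
    congr 1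
    apply MvPolynomial.ringHom_ext
    · intro r; simp
    · rintro ⟨i, j⟩
      simp; ring
  have hQ0 : Q = 0 := by
    apply Polynomial.eq_zero_of_infinite_isRoot
    refine (Set.infinite_range_of_injective Complex.ofReal_injective).mono ?_
    rintro _ ⟨t, rfl⟩
    show Polynomial.eval _ _ = 0
    rw [hQe]
    apply h1
    apply hAh.add
    show star _ = _
    rw [star_smul, show star B = B from hBh]
    simp
  have := hQe Complex.I
  rw [hQ0] at this
  have hz : z = fun s => (A + Complex.I • B) s.1 s.2 := by
    ext ⟨i, j⟩
    simp [hA, hB, hM]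
    have := Complex.I_mul_I
    linear_combination (z (i,j) - (starRingEnd ℂ) (z (j,i))) / 2 * this
  rw [hz, ← this]; simp

section symtrace
variable {R S σ : Type*} [CommRing R] [CommRing S] [Fintype σ] [DecidableEq σ]

noncomputable def subst (A : Matrix σ σ R) : MvPolynomial σ R →ₐ[R] MvPolynomial σ R :=
  MvPolynomial.aeval (fun i => ∑ j, MvPolynomial.C (A i j) * MvPolynomial.X j)

noncomputable def cf (A : Matrix σ σ R) (n m : σ →₀ ℕ) : R :=
  MvPolynomial.coeff n (subst A (MvPolynomial.monomial m 1))

/-- trace on the `k`-th symmetric power -/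
noncomputable def symTr (k : ℕ) (A : Matrix σ σ R) : R :=
  ∑ m ∈ Finset.finsuppAntidiag Finset.univ k, cf A m m

lemma mem_S {k : ℕ} {m : σ →₀ ℕ} : m ∈ Finset.finsuppAntidiag (Finset.univ : Finset σ) k ↔ m.degree = k := by
  simp [Finset.mem_finsuppAntidiag, Finsupp.degree_eq_sum]

lemma eval_subst (A : Matrix σ σ R) (P : MvPolynomial σ R) (z : σ → R) :
    MvPolynomial.eval z (subst A P) = MvPolynomial.eval (A *ᵥ z) P := by
  rw [subst, MvPolynomial.aeval_def, MvPolynomial.algebraMap_eq, ← MvPolynomial.coe_eval₂Hom, ← RingHom.comp_apply]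
  congr 1
  apply MvPolynomial.ringHom_ext
  · intro r; simp
  · intro i; simp [Matrix.mulVec, dotProduct]

lemma subst_hom (A : Matrix σ σ R) (m : σ →₀ ℕ) :
    (subst A (MvPolynomial.monomial m 1)).IsHomogeneous m.degree := by
  rw [subst, MvPolynomial.aeval_monomial, map_one, one_mul, Finsupp.prod, Finsupp.degree]
  apply MvPolynomial.IsHomogeneous.prod
  intro i _
  have : (∑ j, MvPolynomial.C (A i j) * MvPolynomial.X j : MvPolynomial σ R).IsHomogeneous 1 := by
    apply MvPolynomial.IsHomogeneous.sum
    intro j _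
    exact MvPolynomial.isHomogeneous_C_mul_X _ _
  simpa using this.pow (m i)

lemma cf_zero (A : Matrix σ σ R) {n m : σ →₀ ℕ} (h : n.degree ≠ m.degree) : cf A n m = 0 :=
  (subst_hom A m).coeff_eq_zero h

lemma subst_monomial (A : Matrix σ σ R) (m : σ →₀ ℕ) (k : ℕ) (hm : m.degree = k) :
    subst A (MvPolynomial.monomial m 1) =
      ∑ n ∈ Finset.finsuppAntidiag Finset.univ k, MvPolynomial.monomial n (cf A n m) := by
  ext n
  rw [MvPolynomial.coeff_sum]
  simp only [MvPolynomial.coeff_monomial]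
  rw [Finset.sum_ite_eq']
  split_ifs with h
  · rfl
  · rw [mem_S] at h
    exact cf_zero A (by omega)

lemma subst_mul (A B : Matrix σ σ R) (P : MvPolynomial σ R) :
    subst A (subst B P) = subst (B * A) P := by
  rw [← AlgHom.comp_apply]
  congr 1
  apply MvPolynomial.algHom_ext
  intro i
  simp [subst, Matrix.mul_apply, Finset.mul_sum, Finset.sum_mul]
  rw [Finset.sum_comm]
  simp [mul_assoc]

lemma symTr_mul (k : ℕ) (A B : Matrix σ σ R) : symTr k (B * A) =
    ∑ m ∈ Finset.finsuppAntidiag Finset.univ k, ∑ n ∈ Finset.finsuppAntidiag Finset.univ k,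
      cf B n m * cf A m n := by
  apply Finset.sum_congr rfl
  intro m hm
  rw [cf, ← subst_mul, subst_monomial B m k (mem_S.1 hm), map_sum, MvPolynomial.coeff_sum]
  apply Finset.sum_congr rfl
  intro n _
  have : MvPolynomial.monomial n (cf B n m) = cf B n m • MvPolynomial.monomial n (1 : R) := by
    rw [MvPolynomial.smul_monomial, smul_eq_mul, mul_one]
  rw [this, map_smul, MvPolynomial.coeff_smul, smul_eq_mul]
  rfl

lemma symTr_comm (k : ℕ) (A B : Matrix σ σ R) : symTr k (B * A) = symTr k (A * B) := by
  rw [symTr_mul, symTr_mul, Finset.sum_comm]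
  simp only [mul_comm]

lemma cf_map (f : R →+* S) (A : Matrix σ σ R) (n m : σ →₀ ℕ) :
    f (cf A n m) = cf (A.map f) n m := by
  have : ∀ P, MvPolynomial.map f (subst A P) = subst (A.map f) (MvPolynomial.map f P) := by
    intro P
    simp only [subst, MvPolynomial.aeval_def, MvPolynomial.algebraMap_eq, ← MvPolynomial.coe_eval₂Hom, ← RingHom.comp_apply]
    congr 1
    apply MvPolynomial.ringHom_ext
    · intro r; simp
    · intro i; simp
  rw [cf, ← MvPolynomial.coeff_map, this, MvPolynomial.map_monomial, map_one, cf]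

lemma symTr_map (f : R →+* S) (k : ℕ) (A : Matrix σ σ R) :
    f (symTr k A) = symTr k (A.map f) := by
  simp [symTr, cf_map]

lemma symTr_diagonal (k : ℕ) (d : σ → R) : symTr k (diagonal d) =
    ∑ m ∈ Finset.finsuppAntidiag Finset.univ k, ∏ i, d i ^ m i := by
  apply Finset.sum_congr rfl
  intro m _
  rw [cf, subst, MvPolynomial.aeval_monomial, map_one, one_mul]
  have : ∀ i, (∑ j, MvPolynomial.C (diagonal d i j) * MvPolynomial.X j : MvPolynomial σ R) =
      MvPolynomial.C (d i) * MvPolynomial.X i := by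
    intro i
    rw [Finset.sum_eq_single i]
    · simp
    · intro j _ hj
      simp [Matrix.diagonal_apply_ne' d hj]
    · simp
  simp only [this, mul_pow]
  rw [Finsupp.prod_fintype _ _ (by simp), Finset.prod_mul_distrib]
  simp only [← map_pow, ← map_prod, MvPolynomial.coeff_C_mul]
  have h2 : (∏ x, MvPolynomial.X x ^ m x : MvPolynomial σ R) = MvPolynomial.monomial m 1 := by
    rw [MvPolynomial.monomial_eq, Finsupp.prod_fintype _ _ (by simp)]; simp
  rw [h2]; simp

end symtrace

lemma geom_prod {σ : Type*} [DecidableEq σ] (s : Finset σ) (d : σ → ℂ) (hd : ∀ i, ‖d i‖ < 1) :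
    (Summable fun k => ‖∑ m ∈ Finset.finsuppAntidiag s k, ∏ i ∈ s, d i ^ m i‖) ∧
    HasSum (fun k => ∑ m ∈ Finset.finsuppAntidiag s k, ∏ i ∈ s, d i ^ m i) (∏ i ∈ s, (1 - d i)⁻¹) := by
  have hc : ∀ s : Finset σ, ∀ k, ∑ m ∈ Finset.finsuppAntidiag s k, ∏ i ∈ s, d i ^ m i =
      PowerSeries.coeff k (∏ i ∈ s, PowerSeries.mk (fun n => d i ^ n)) := by
    intro s k; rw [PowerSeries.coeff_prod]; simp
  simp only [hc]
  induction s using Finset.induction_on with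
  | empty =>
    simp only [Finset.prod_empty, PowerSeries.coeff_one]
    constructor
    · apply summable_of_ne_finset_zero (s := {0})
      intro b hb
      simp at hb
      simp [hb]
    · convert hasSum_ite_eq (0 : ℕ) (1:ℂ)
  | insert a s ha ih =>
    simp only [Finset.prod_insert ha, PowerSeries.coeff_mul, PowerSeries.coeff_mk]
    have h1 : Summable fun n => ‖d a ^ n‖ := by
      simp only [norm_pow]; exact summable_geometric_of_lt_one (norm_nonneg _) (hd a)
    have h3 := summable_norm_sum_mul_antidiagonal_of_summable_norm h1 ih.1
    refine ⟨h3, ?_⟩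
    rw [← ih.2.tsum_eq, ← tsum_geometric_of_norm_lt_one (hd a),
      tsum_mul_tsum_eq_tsum_sum_antidiagonal_of_summable_norm h1 ih.1]
    exact h3.of_norm.hasSum

section kron
open Kronecker

lemma symTr_kron_conj {N k : ℕ} {ι : Type*} [Fintype ι] [DecidableEq ι]
    (V W M : Matrix (Fin N) (Fin N) ℂ) (h : W * V = 1) (x : ι → ℂ) :
    symTr k ((V * M * W) ⊗ₖ diagonal x) = symTr k (M ⊗ₖ diagonal x) := by
  have h1 : (V * M * W) ⊗ₖ diagonal x = (V ⊗ₖ (1 : Matrix ι ι ℂ)) * ((M * W) ⊗ₖ diagonal x) := by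
    rw [← Matrix.mul_kronecker_mul, one_mul, mul_assoc]
  rw [h1, symTr_comm, ← Matrix.mul_kronecker_mul, mul_one, mul_assoc, h, mul_one]

/-- bounding sequence -/
noncomputable def bnd (σ : Type*) [Fintype σ] [DecidableEq σ] (r : ℝ) (k : ℕ) : ℝ :=
  ∑ m ∈ Finset.finsuppAntidiag (Finset.univ : Finset σ) k, ∏ i, r ^ m i

lemma bnd_summable (σ : Type*) [Fintype σ] [DecidableEq σ] (r : ℝ) (h0 : 0 ≤ r) (h1 : r < 1) :
    Summable (bnd σ r) := by
  have := (geom_prod (Finset.univ : Finset σ) (fun _ => (r : ℂ)) (fun _ => by simpa [abs_of_nonneg h0] using h1)).1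
  refine this.congr ?_
  intro k
  have : (∑ m ∈ Finset.finsuppAntidiag (Finset.univ : Finset σ) k, ∏ i, (r : ℂ) ^ m i) = ((bnd σ r k : ℝ) : ℂ) := by
    simp [bnd]
  rw [this, Complex.norm_real, Real.norm_of_nonneg]
  exact Finset.sum_nonneg fun _ _ => Finset.prod_nonneg fun _ _ => pow_nonneg h0 _

lemma symTr_hasSum {N : ℕ} {ι : Type*} [Fintype ι] [DecidableEq ι]
    (V W : Matrix (Fin N) (Fin N) ℂ) (h : W * V = 1) (d : Fin N → ℂ) (hd : ∀ i, ‖d i‖ ≤ 1)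
    (x : ι → ℂ) (r : ℝ) (hr : r < 1) (hx : ∀ i, ‖x i‖ ≤ r) (h0 : 0 ≤ r) :
    HasSum (fun k => symTr k ((V * diagonal d * W) ⊗ₖ diagonal x))
      (∏ j, (det (1 - x j • (V * diagonal d * W)))⁻¹) ∧
    ∀ k, ‖symTr k ((V * diagonal d * W) ⊗ₖ diagonal x)‖ ≤ bnd (Fin N × ι) r k := by
  have h' : V * W = 1 := mul_eq_one_comm.1 h
  have hle : ∀ s : Fin N × ι, ‖d s.1 * x s.2‖ ≤ r := by
    intro s
    rw [norm_mul]
    calc _ ≤ 1 * r := mul_le_mul (hd _) (hx _) (norm_nonneg _) zero_le_one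
      _ = r := one_mul r
  simp only [symTr_kron_conj _ _ _ h, diagonal_kronecker_diagonal, symTr_diagonal]
  constructor
  · have e := (geom_prod (Finset.univ : Finset (Fin N × ι)) (fun s => d s.1 * x s.2) (fun s => (hle s).trans_lt hr)).2
    convert e using 1
    rw [Fintype.prod_prod_type, Finset.prod_comm]
    apply Finset.prod_congr rfl
    intro j _
    have : 1 - x j • (V * diagonal d * W) = V * diagonal (fun i => 1 - d i * x j) * W := by
      have e1 : diagonal (fun i => 1 - d i * x j) = 1 - x j • diagonal d := by
        rw [← diagonal_one, ← diagonal_smul, diagonal_sub]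
        congr 1; ext i; simp [mul_comm]
      rw [e1, mul_sub, sub_mul, mul_one, h', mul_smul_comm, smul_mul_assoc]
    rw [this, det_mul, det_mul, mul_right_comm, ← det_mul, h', det_one, one_mul, det_diagonal, Finset.prod_inv_distrib]
  · intro k
    refine (norm_sum_le _ _).trans (Finset.sum_le_sum fun m _ => ?_)
    rw [norm_prod]
    refine Finset.prod_le_prod (fun _ _ => norm_nonneg _) fun i _ => ?_
    rw [norm_pow]
    exact pow_le_pow_left₀ (norm_nonneg _) (hle i) _

end kron

section integ
open Kronecker

lemma cf_continuous {σ : Type*} [Fintype σ] [DecidableEq σ] (n m : σ →₀ ℕ) :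
    Continuous fun A : Matrix σ σ ℂ => cf A n m := by
  have h : ∀ A : Matrix σ σ ℂ, cf A n m = MvPolynomial.eval (fun s : σ × σ => A s.1 s.2)
      (cf (Matrix.of fun i j => MvPolynomial.X (i, j) : Matrix σ σ (MvPolynomial (σ × σ) ℂ)) n m) := by
    intro A
    rw [cf_map]
    congr 1
    ext i j
    simp
  simp only [h]
  refine (MvPolynomial.continuous_eval _).comp ?_
  exact continuous_pi fun s => continuous_id.matrix_elem s.1 s.2

lemma coeff_subst {σ : Type*} [Fintype σ] [DecidableEq σ] (A : Matrix σ σ ℂ) (G : MvPolynomial σ ℂ) (n : σ →₀ ℕ) :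
    MvPolynomial.coeff n (subst A G) = ∑ p ∈ G.support, MvPolynomial.coeff p G * cf A n p := by
  conv_lhs => rw [G.as_sum, map_sum, MvPolynomial.coeff_sum]
  apply Finset.sum_congr rfl
  intro p _
  have : MvPolynomial.monomial p (G.coeff p) = G.coeff p • MvPolynomial.monomial p (1 : ℂ) := by
    rw [MvPolynomial.smul_monomial, smul_eq_mul, mul_one]
  rw [this, map_smul, MvPolynomial.coeff_smul, smul_eq_mul]
  rfl

lemma coeff_subst_zero {σ : Type*} [Fintype σ] [DecidableEq σ] (A : Matrix σ σ ℂ) (G : MvPolynomial σ ℂ) (n : σ →₀ ℕ)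
    (h : G.totalDegree < n.degree) : MvPolynomial.coeff n (subst A G) = 0 := by
  rw [coeff_subst]
  apply Finset.sum_eq_zero
  intro p hp
  have h2 := MvPolynomial.le_totalDegree hp
  have h3 : p.degree = p.sum fun _ e => e := rfl
  rw [cf_zero A (by omega), mul_zero]

lemma eval_eq_deg {σ : Type*} [Fintype σ] [DecidableEq σ] (P : MvPolynomial σ ℂ) (K : ℕ)
    (h : ∀ n, K ≤ n.degree → P.coeff n = 0) (z : σ → ℂ) :
    MvPolynomial.eval z P = ∑ k ∈ Finset.range K, ∑ n ∈ Finset.finsuppAntidiag Finset.univ k,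
      P.coeff n * MvPolynomial.eval z (MvPolynomial.monomial n 1) := by
  have hd : ((Finset.range K : Finset ℕ) : Set ℕ).PairwiseDisjoint
      (fun k => Finset.finsuppAntidiag (Finset.univ : Finset σ) k) := by
    intro a _ b _ hab
    rw [Function.onFun, Finset.disjoint_left]
    intro m ha hb
    rw [mem_S] at ha hb
    exact hab (ha.symm.trans hb)
  rw [← Finset.sum_biUnion hd]
  conv_lhs => rw [P.as_sum, map_sum]
  have e : ∀ n, MvPolynomial.eval z (MvPolynomial.monomial n (P.coeff n)) =
      P.coeff n * MvPolynomial.eval z (MvPolynomial.monomial n 1) := by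
    intro n; simp [MvPolynomial.eval_monomial]
  simp only [e]
  apply Finset.sum_subset
  · intro n hn
    rw [Finset.mem_biUnion]
    refine ⟨n.degree, ?_, mem_S.2 rfl⟩
    rw [Finset.mem_range]
    by_contra hc
    exact (MvPolynomial.mem_support_iff.1 hn) (h n (by omega))
  · intro n _ hn
    rw [MvPolynomial.notMem_support_iff.1 hn, zero_mul]

lemma isCompact_unitary (N : ℕ) : CompactSpace (Matrix.unitaryGroup (Fin N) ℂ) := by
  refine isCompact_iff_compactSpace.1 (?_ : IsCompact ((Matrix.unitaryGroup (Fin N) ℂ : Submonoid _) : Set (Matrix (Fin N) (Fin N) ℂ)))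
  have hc : IsCompact (Set.univ.pi fun _ : Fin N => Set.univ.pi fun _ : Fin N => Metric.closedBall (0:ℂ) 1) :=
    isCompact_univ_pi fun _ => isCompact_univ_pi fun _ => isCompact_closedBall _ _
  refine IsCompact.of_isClosed_subset (X := Matrix (Fin N) (Fin N) ℂ) hc ?_ ?_
  · have : ((Matrix.unitaryGroup (Fin N) ℂ : Submonoid _) : Set (Matrix (Fin N) (Fin N) ℂ)) = {M | M * star M = 1} := by
      ext M; exact Matrix.mem_unitaryGroup_iff
    rw [this]
    exact isClosed_eq (continuous_id.mul continuous_star) continuous_const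
  · intro M hM i _ j _
    simpa using entry_norm_bound_of_unitary hM i j

variable {N : ℕ} {σ : Type*} [Fintype σ] [DecidableEq σ]
  (μ : Measure (Matrix.unitaryGroup (Fin N) ℂ)) [μ.IsHaarMeasure] [IsProbabilityMeasure μ]

include μ in
lemma cont_int {g : Matrix.unitaryGroup (Fin N) ℂ → ℂ} (hg : Continuous g) : Integrable g μ := by
  have := isCompact_unitary N
  exact hg.integrable_of_hasCompactSupport (HasCompactSupport.of_compactSpace g)

lemma intPoly (g : Matrix.unitaryGroup (Fin N) ℂ → ℂ) (hg : Continuous g)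
    (A : Matrix.unitaryGroup (Fin N) ℂ → Matrix σ σ ℂ) (hA : Continuous A) (G : MvPolynomial σ ℂ) :
    ∃ Q : MvPolynomial σ ℂ, (∀ n, Q.coeff n = ∫ u, g u * (subst (A u) G).coeff n ∂μ) ∧
      ∀ z, MvPolynomial.eval z Q = ∫ u, g u * MvPolynomial.eval (A u *ᵥ z) G ∂μ := by
  set E := (Finset.range (G.totalDegree + 1)).biUnion
    (fun k => Finset.finsuppAntidiag (Finset.univ : Finset σ) k) with hE
  have hcont : ∀ n, Continuous fun u => g u * (subst (A u) G).coeff n := by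
    intro n
    simp only [coeff_subst]
    exact hg.mul (continuous_finsetSum _ fun p _ => continuous_const.mul ((cf_continuous n p).comp hA))
  set Q : MvPolynomial σ ℂ := ∑ n ∈ E, MvPolynomial.monomial n (∫ u, g u * (subst (A u) G).coeff n ∂μ) with hQ
  have hcoef : ∀ n, Q.coeff n = ∫ u, g u * (subst (A u) G).coeff n ∂μ := by
    intro n
    rw [hQ, MvPolynomial.coeff_sum]
    simp only [MvPolynomial.coeff_monomial]
    rw [Finset.sum_ite_eq']
    split_ifs with h
    · rfl
    · have : G.totalDegree < n.degree := by
        by_contra hc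
        exact h (Finset.mem_biUnion.2 ⟨n.degree, Finset.mem_range.2 (by omega), mem_S.2 rfl⟩)
      simp [coeff_subst_zero _ G n this]
  refine ⟨Q, hcoef, ?_⟩
  intro z
  rw [eval_eq_deg Q (G.totalDegree + 1)]
  · simp only [hcoef]
    have : ∀ u, g u * MvPolynomial.eval (A u *ᵥ z) G = ∑ k ∈ Finset.range (G.totalDegree + 1),
        ∑ n ∈ Finset.finsuppAntidiag Finset.univ k,
        (g u * (subst (A u) G).coeff n) * MvPolynomial.eval z (MvPolynomial.monomial n 1) := by
      intro u
      rw [← eval_subst, eval_eq_deg (subst (A u) G) (G.totalDegree + 1) (fun n hn => coeff_subst_zero _ G n hn)]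
      simp only [Finset.mul_sum, mul_assoc]
    simp only [this]
    rw [integral_finsetSum]
    · apply Finset.sum_congr rfl
      intro k _
      rw [integral_finsetSum]
      · apply Finset.sum_congr rfl
        intro n _
        rw [integral_mul_const]
      · intro n _
        exact (cont_int μ (hcont n)).mul_const _
    · intro k _
      exact integrable_finsetSum _ fun n _ => (cont_int μ (hcont n)).mul_const _
  · intro n hn
    rw [hcoef]
    simp [coeff_subst_zero _ G n hn]

/-- vectorisation of a matrix -/
def vc (Z : Matrix (Fin N) (Fin N) ℂ) : Fin N × Fin N → ℂ := fun s => Z s.1 s.2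

lemma kron_vc (M K Z : Matrix (Fin N) (Fin N) ℂ) : (M ⊗ₖ K) *ᵥ vc Z = vc (M * Z * Kᵀ) := by
  ext ⟨i, j⟩
  simp only [Matrix.mulVec, dotProduct, vc, kroneckerMap_apply, Matrix.mul_apply, transpose_apply,
    Fintype.sum_prod_type, Finset.sum_mul]
  rw [Finset.sum_comm]
  refine Finset.sum_congr rfl fun a _ => Finset.sum_congr rfl fun b _ => by ring

lemma cont_vc {X : Type*} [TopologicalSpace X] {f : X → Matrix (Fin N) (Fin N) ℂ} (hf : Continuous f)
    (P : MvPolynomial (Fin N × Fin N) ℂ) : Continuous fun a => MvPolynomial.eval (vc (f a)) P := by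
  refine (MvPolynomial.continuous_eval _).comp ?_
  exact continuous_pi fun s => hf.matrix_elem s.1 s.2

lemma cont_kron {X κ : Type*} [TopologicalSpace X] {f : X → Matrix (Fin N) (Fin N) ℂ}
    {g : X → Matrix κ κ ℂ} (hf : Continuous f)
    (hg : Continuous g) : Continuous fun a => f a ⊗ₖ g a :=
  continuous_matrix fun i j => (hf.matrix_elem i.1 j.1).mul (hg.matrix_elem i.2 j.2)

lemma pairing (x : Fin N → ℂ) (F : MvPolynomial (Fin N × Fin N) ℂ) (n m : Fin N × Fin N →₀ ℕ) :
    ∫ u, MvPolynomial.eval (vc (u : Matrix (Fin N) (Fin N) ℂ)) F *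
        cf (star (u : Matrix (Fin N) (Fin N) ℂ) ⊗ₖ diagonal x) n m ∂μ =
    ∫ u, MvPolynomial.eval (vc (star (u : Matrix (Fin N) (Fin N) ℂ) * diagonal x)) (MvPolynomial.monomial m 1) *
        (subst ((1 : Matrix (Fin N) (Fin N) ℂ) ⊗ₖ (u : Matrix (Fin N) (Fin N) ℂ)ᵀ) F).coeff n ∂μ := by
  have cu : Continuous fun u : Matrix.unitaryGroup (Fin N) ℂ => (u : Matrix (Fin N) (Fin N) ℂ) :=
    continuous_subtype_val
  obtain ⟨Q₁, h1, h1'⟩ := intPoly μ (fun u => MvPolynomial.eval (vc (u : Matrix (Fin N) (Fin N) ℂ)) F)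
    (cont_vc cu F) (fun u => star (u : Matrix (Fin N) (Fin N) ℂ) ⊗ₖ diagonal x)
    (cont_kron cu.star continuous_const) (MvPolynomial.monomial m 1)
  obtain ⟨Q₂, h2, h2'⟩ := intPoly μ
    (fun u => MvPolynomial.eval (vc (star (u : Matrix (Fin N) (Fin N) ℂ) * diagonal x)) (MvPolynomial.monomial m 1))
    (cont_vc (cu.star.mul continuous_const) _)
    (fun u => (1 : Matrix (Fin N) (Fin N) ℂ) ⊗ₖ (u : Matrix (Fin N) (Fin N) ℂ)ᵀ)
    (cont_kron continuous_const cu.matrix_transpose) F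
  have hQ : Q₁ - Q₂ = 0 := by
    apply zariski
    intro Z
    change MvPolynomial.eval (vc (Z : Matrix (Fin N) (Fin N) ℂ)) _ = 0
    rw [map_sub, h1', h2', sub_eq_zero]
    simp only [kron_vc, one_mul, transpose_transpose, diagonal_transpose]
    rw [← integral_mul_left_eq_self _ Z]
    congr 1
    ext u
    have : star ((Z * u : Matrix.unitaryGroup (Fin N) ℂ) : Matrix (Fin N) (Fin N) ℂ) * (Z : Matrix (Fin N) (Fin N) ℂ)
        = star (u : Matrix (Fin N) (Fin N) ℂ) := by
      rw [Submonoid.coe_mul, star_mul, mul_assoc, Unitary.coe_star_mul_self, mul_one]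
    rw [this, mul_comm]
    rfl
  have := congrArg (MvPolynomial.coeff n) (sub_eq_zero.1 hQ)
  rw [h1, h2] at this
  exact this

lemma reprod (x : Fin N → ℂ) (F : MvPolynomial (Fin N × Fin N) ℂ)
    (hF : ∀ (u : Matrix.unitaryGroup (Fin N) ℂ) (M : Matrix (Fin N) (Fin N) ℂ),
      MvPolynomial.eval (vc (star (u : Matrix (Fin N) (Fin N) ℂ) * M * (u : Matrix (Fin N) (Fin N) ℂ))) F = MvPolynomial.eval (vc M) F)
    (K : ℕ) (hK : F.totalDegree < K) :
    ∑ k ∈ Finset.range K, ∫ u, MvPolynomial.eval (vc (u : Matrix (Fin N) (Fin N) ℂ)) F *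
        symTr k (star (u : Matrix (Fin N) (Fin N) ℂ) ⊗ₖ diagonal x) ∂μ =
      MvPolynomial.eval (vc (diagonal x)) F := by
  have cu : Continuous fun u : Matrix.unitaryGroup (Fin N) ℂ => (u : Matrix (Fin N) (Fin N) ℂ) :=
    continuous_subtype_val
  have i1 : ∀ m n, Integrable (fun u : Matrix.unitaryGroup (Fin N) ℂ => MvPolynomial.eval (vc (u : Matrix (Fin N) (Fin N) ℂ)) F *
        cf (star (u : Matrix (Fin N) (Fin N) ℂ) ⊗ₖ diagonal x) n m) μ := by
    intro m n
    exact cont_int μ ((cont_vc cu F).mul ((cf_continuous n m).comp (cont_kron cu.star continuous_const)))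
  have i2 : ∀ m n, Integrable (fun u : Matrix.unitaryGroup (Fin N) ℂ => MvPolynomial.eval (vc (star (u : Matrix (Fin N) (Fin N) ℂ) * diagonal x)) (MvPolynomial.monomial m 1) *
        (subst ((1 : Matrix (Fin N) (Fin N) ℂ) ⊗ₖ (u : Matrix (Fin N) (Fin N) ℂ)ᵀ) F).coeff n) μ := by
    intro m n
    apply cont_int μ
    simp only [coeff_subst]
    exact (cont_vc (cu.star.mul continuous_const) _).mul (continuous_finsetSum _ fun p _ =>
      continuous_const.mul ((cf_continuous n p).comp (cont_kron continuous_const cu.matrix_transpose)))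
  have e1 : ∀ k, ∫ u, MvPolynomial.eval (vc (u : Matrix (Fin N) (Fin N) ℂ)) F *
        symTr k (star (u : Matrix (Fin N) (Fin N) ℂ) ⊗ₖ diagonal x) ∂μ =
      ∫ u, ∑ m ∈ Finset.finsuppAntidiag Finset.univ k, MvPolynomial.eval (vc (star (u : Matrix (Fin N) (Fin N) ℂ) * diagonal x)) (MvPolynomial.monomial m 1) *
        (subst ((1 : Matrix (Fin N) (Fin N) ℂ) ⊗ₖ (u : Matrix (Fin N) (Fin N) ℂ)ᵀ) F).coeff m ∂μ := by
    intro k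
    simp only [symTr, Finset.mul_sum]
    rw [integral_finsetSum _ fun m _ => i1 m m, integral_finsetSum _ fun m _ => i2 m m]
    exact Finset.sum_congr rfl fun m _ => pairing μ x F m m
  simp only [e1]
  rw [← integral_finsetSum _ fun k _ => integrable_finsetSum _ fun m _ => i2 m m]
  have e2 : ∀ u : Matrix.unitaryGroup (Fin N) ℂ, ∑ k ∈ Finset.range K, ∑ m ∈ Finset.finsuppAntidiag Finset.univ k, MvPolynomial.eval (vc (star (u : Matrix (Fin N) (Fin N) ℂ) * diagonal x)) (MvPolynomial.monomial m 1) *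
        (subst ((1 : Matrix (Fin N) (Fin N) ℂ) ⊗ₖ (u : Matrix (Fin N) (Fin N) ℂ)ᵀ) F).coeff m = MvPolynomial.eval (vc (diagonal x)) F := by
    intro u
    rw [← hF u, ← one_mul (star (u : Matrix (Fin N) (Fin N) ℂ) * diagonal x), ← transpose_transpose (u : Matrix (Fin N) (Fin N) ℂ)]
    rw [← kron_vc, ← eval_subst, eval_eq_deg _ K (fun n hn => coeff_subst_zero _ F n (by omega))]
    simp only [transpose_transpose, one_mul, mul_comm]
  simp only [e2]
  simp

lemma classPoly {ι : Type*} [Fintype ι] [DecidableEq ι] (y : ι → ℂ) (l : ℕ) :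
    ∃ F : MvPolynomial (Fin N × Fin N) ℂ, ∀ M : Matrix (Fin N) (Fin N) ℂ,
      MvPolynomial.eval (vc M) F = symTr l (M ⊗ₖ diagonal y) := by
  refine ⟨symTr l ((Matrix.of fun i j => MvPolynomial.X (i, j) : Matrix (Fin N) (Fin N) (MvPolynomial (Fin N × Fin N) ℂ)) ⊗ₖ
    diagonal (fun i => MvPolynomial.C (y i))), ?_⟩
  intro M
  rw [symTr_map]
  congr 1
  ext ⟨i, a⟩ ⟨j, b⟩
  by_cases h : a = b <;> simp [vc, h]

lemma core {ι : Type*} [Fintype ι] [DecidableEq ι] (x : Fin N → ℂ) (y : ι → ℂ)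
    (hx : ∀ i, ‖x i‖ < 1) (hy : ∀ i, ‖y i‖ < 1) :
    ∫ u, (∏ j, (det (1 - y j • (u : Matrix (Fin N) (Fin N) ℂ)))⁻¹) *
      (∏ i, (det (1 - x i • star (u : Matrix (Fin N) (Fin N) ℂ)))⁻¹) ∂μ =
    ∏ j, ∏ i, (1 - y j * x i)⁻¹ := by
  have cu : Continuous fun u : Matrix.unitaryGroup (Fin N) ℂ => (u : Matrix (Fin N) (Fin N) ℂ) :=
    continuous_subtype_val
  have bd : ∀ {κ : Type _} [Fintype κ] (z : κ → ℂ), (∀ i, ‖z i‖ < 1) → ∃ r : ℝ, 0 ≤ r ∧ r < 1 ∧ ∀ i, ‖z i‖ ≤ r := by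
    intro κ _ z hz
    refine ⟨((Finset.univ.sup fun i => ‖z i‖₊ : NNReal) : ℝ), NNReal.coe_nonneg _, ?_, ?_⟩
    · rw [← NNReal.coe_one, NNReal.coe_lt_coe, Finset.sup_lt_iff (by simp)]
      intro i _
      exact_mod_cast hz i
    · intro i
      have := Finset.le_sup (f := fun i => ‖z i‖₊) (Finset.mem_univ i)
      exact_mod_cast this
  obtain ⟨r, hr0, hr1, hr⟩ := bd (κ := ULift (Fin N)) (fun i => x i.down) (fun i => hx _)
  obtain ⟨s, hs0, hs1, hs⟩ := bd (κ := ι) y hy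
  have hr' : ∀ i, ‖x i‖ ≤ r := fun i => hr ⟨i⟩
  have hG : ∀ u : Matrix.unitaryGroup (Fin N) ℂ,
      HasSum (fun k => symTr k (star (u : Matrix (Fin N) (Fin N) ℂ) ⊗ₖ diagonal x))
        (∏ i, (det (1 - x i • star (u : Matrix (Fin N) (Fin N) ℂ)))⁻¹) ∧
      ∀ k, ‖symTr k (star (u : Matrix (Fin N) (Fin N) ℂ) ⊗ₖ diagonal x)‖ ≤ bnd (Fin N × Fin N) r k := by
    intro u
    obtain ⟨V, d, hd, e⟩ := unitary_diag (star u)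
    have e' : star (u : Matrix (Fin N) (Fin N) ℂ) = V * diagonal d * star (V : Matrix (Fin N) (Fin N) ℂ) := e
    rw [e']
    exact symTr_hasSum _ _ (Unitary.coe_star_mul_self V) d (fun i => (hd i).le) x r hr1 hr' hr0
  have hf : ∀ u : Matrix.unitaryGroup (Fin N) ℂ,
      HasSum (fun k => symTr k ((u : Matrix (Fin N) (Fin N) ℂ) ⊗ₖ diagonal y))
        (∏ i, (det (1 - y i • (u : Matrix (Fin N) (Fin N) ℂ)))⁻¹) ∧
      ∀ k, ‖symTr k ((u : Matrix (Fin N) (Fin N) ℂ) ⊗ₖ diagonal y)‖ ≤ bnd (Fin N × ι) s k := by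
    intro u
    obtain ⟨V, d, hd, e⟩ := unitary_diag u
    rw [e]
    exact symTr_hasSum _ _ (Unitary.coe_star_mul_self V) d (fun i => (hd i).le) y s hs1 hs hs0
  have hfX := (symTr_hasSum (1 : Matrix (Fin N) (Fin N) ℂ) 1 (one_mul 1) x (fun i => (hx i).le) y s hs1 hs hs0).1
  simp only [one_mul, mul_one] at hfX
  have br := bnd_summable (Fin N × Fin N) r hr0 hr1
  have bs := bnd_summable (Fin N × ι) s hs0 hs1
  have cf1 : ∀ l, Continuous fun u : Matrix.unitaryGroup (Fin N) ℂ => symTr l ((u : Matrix (Fin N) (Fin N) ℂ) ⊗ₖ diagonal y) := by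
    intro l
    exact (continuous_finsetSum _ fun m _ => cf_continuous m m).comp (cont_kron cu continuous_const)
  have cg1 : ∀ l, Continuous fun u : Matrix.unitaryGroup (Fin N) ℂ => symTr l (star (u : Matrix (Fin N) (Fin N) ℂ) ⊗ₖ diagonal x) := by
    intro l
    exact (continuous_finsetSum _ fun m _ => cf_continuous m m).comp (cont_kron cu.star continuous_const)
  have cG : Continuous fun u : Matrix.unitaryGroup (Fin N) ℂ => ∏ i, (det (1 - x i • star (u : Matrix (Fin N) (Fin N) ℂ)))⁻¹ := by
    have : (fun u : Matrix.unitaryGroup (Fin N) ℂ => ∏ i, (det (1 - x i • star (u : Matrix (Fin N) (Fin N) ℂ)))⁻¹) =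
        fun u : Matrix.unitaryGroup (Fin N) ℂ => ∑' k, symTr k (star (u : Matrix (Fin N) (Fin N) ℂ) ⊗ₖ diagonal x) := by
      ext u; exact (hG u).1.tsum_eq.symm
    rw [this]
    exact continuous_tsum cg1 br fun k u => (hG u).2 k
  have bG : ∀ u : Matrix.unitaryGroup (Fin N) ℂ, ‖∏ i, (det (1 - x i • star (u : Matrix (Fin N) (Fin N) ℂ)))⁻¹‖ ≤ ∑' k, bnd (Fin N × Fin N) r k := by
    intro u
    rw [← (hG u).1.tsum_eq]
    exact tsum_of_norm_bounded br.hasSum (hG u).2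
  -- step 1
  have step1 : ∀ l, ∫ u, symTr l ((u : Matrix (Fin N) (Fin N) ℂ) ⊗ₖ diagonal y) *
      (∏ i, (det (1 - x i • star (u : Matrix (Fin N) (Fin N) ℂ)))⁻¹) ∂μ = symTr l (diagonal x ⊗ₖ diagonal y) := by
    intro l
    have h1 : HasSum (fun k => ∫ u, symTr l ((u : Matrix (Fin N) (Fin N) ℂ) ⊗ₖ diagonal y) *
        symTr k (star (u : Matrix (Fin N) (Fin N) ℂ) ⊗ₖ diagonal x) ∂μ)
        (∫ u, symTr l ((u : Matrix (Fin N) (Fin N) ℂ) ⊗ₖ diagonal y) *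
      (∏ i, (det (1 - x i • star (u : Matrix (Fin N) (Fin N) ℂ)))⁻¹) ∂μ) := by
      refine hasSum_integral_of_dominated_convergence
        (fun k _ => bnd (Fin N × ι) s l * bnd (Fin N × Fin N) r k) ?_ ?_ ?_ ?_ ?_
      · intro k
        exact ((cf1 l).mul (cg1 k)).aestronglyMeasurable
      · intro k
        refine Filter.Eventually.of_forall fun u => ?_
        rw [norm_mul]
        exact mul_le_mul ((hf u).2 l) ((hG u).2 k) (norm_nonneg _) ((norm_nonneg _).trans ((hf u).2 l))
      · exact Filter.Eventually.of_forall fun u => br.mul_left _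
      · exact integrable_const _
      · exact Filter.Eventually.of_forall fun u => (hG u).1.mul_left _
    obtain ⟨F, hF⟩ := classPoly (N := N) y l
    have h2 := h1.tendsto_sum_nat
    refine tendsto_nhds_unique h2 (tendsto_const_nhds.congr' ?_)
    filter_upwards [Filter.eventually_gt_atTop F.totalDegree] with K hK
    have := reprod μ x F (fun u M => by
      rw [hF, hF]; exact symTr_kron_conj _ _ _ (Unitary.coe_mul_star_self u) y) K hK
    simp only [hF] at this
    exact this.symm
  have step2 : HasSum (fun l => ∫ u, symTr l ((u : Matrix (Fin N) (Fin N) ℂ) ⊗ₖ diagonal y) *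
      (∏ i, (det (1 - x i • star (u : Matrix (Fin N) (Fin N) ℂ)))⁻¹) ∂μ)
      (∫ u, (∏ j, (det (1 - y j • (u : Matrix (Fin N) (Fin N) ℂ)))⁻¹) *
      (∏ i, (det (1 - x i • star (u : Matrix (Fin N) (Fin N) ℂ)))⁻¹) ∂μ) := by
    refine hasSum_integral_of_dominated_convergence
      (fun l _ => bnd (Fin N × ι) s l * ∑' k, bnd (Fin N × Fin N) r k) ?_ ?_ ?_ ?_ ?_
    · intro l
      exact ((cf1 l).mul cG).aestronglyMeasurable
    · intro l
      refine Filter.Eventually.of_forall fun u => ?_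
      rw [norm_mul]
      exact mul_le_mul ((hf u).2 l) (bG u) (norm_nonneg _) ((norm_nonneg _).trans ((hf u).2 l))
    · exact Filter.Eventually.of_forall fun u => bs.mul_right _
    · exact integrable_const _
    · exact Filter.Eventually.of_forall fun u => (hf u).1.mul_right _
  simp only [step1] at step2
  rw [step2.unique hfX]
  refine Finset.prod_congr rfl fun j _ => ?_
  have : (1 : Matrix (Fin N) (Fin N) ℂ) - y j • diagonal x = diagonal (fun i => 1 - y j * x i) := by
    rw [← diagonal_one, ← diagonal_smul, diagonal_sub]; rfl
  rw [this, det_diagonal, Finset.prod_inv_distrib]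

end integ

/-- **Non-compact sector, stable range** (Eq. 1.14): for `N ≥ max(p,q)` the
Haar-average over `U(N)` of a product of reciprocals of characteristic polynomials
is given by a single free-field term. -/
theorem autocorrelation_reciprocals_charpoly_unitary_stable
    (N p q : ℕ) (hp : 1 ≤ p) (hq : 1 ≤ q) (hN : max p q ≤ N)
    (φ : Fin (p + q) → ℂ)
    (hφneg : ∀ j : Fin (p + q), (j : ℕ) < p → (φ j).re < 0)
    (hφpos : ∀ l : Fin (p + q), p ≤ (l : ℕ) → 0 < (φ l).re)
    (μ : Measure (Matrix.unitaryGroup (Fin N) ℂ))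
    [μ.IsHaarMeasure] [IsProbabilityMeasure μ] :
    (∫ u : Matrix.unitaryGroup (Fin N) ℂ,
      (∏ j ∈ Finset.univ.filter (fun j : Fin (p + q) => (j : ℕ) < p),
          (Matrix.det (1 - Complex.exp (φ j) • (u : Matrix (Fin N) (Fin N) ℂ)))⁻¹) *
        (∏ l ∈ Finset.univ.filter (fun l : Fin (p + q) => p ≤ (l : ℕ)),
          (Matrix.det (Complex.exp (φ l) • (1 : Matrix (Fin N) (Fin N) ℂ) -
            (u : Matrix (Fin N) (Fin N) ℂ).map (starRingEnd ℂ)))⁻¹) ∂μ)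
    = Complex.exp (-(N : ℂ) *
          ∑ l ∈ Finset.univ.filter (fun l : Fin (p + q) => p ≤ (l : ℕ)), φ l) *
        ∏ j ∈ Finset.univ.filter (fun j : Fin (p + q) => (j : ℕ) < p),
          ∏ l ∈ Finset.univ.filter (fun l : Fin (p + q) => p ≤ (l : ℕ)),
            (1 - Complex.exp (φ j - φ l))⁻¹ := by
  classical
  obtain ⟨t, rfl⟩ := Nat.exists_eq_add_of_le ((le_max_right p q).trans hN)
  have P1 : ∀ g : Fin (p + q) → ℂ, ∏ j ∈ Finset.univ.filter (fun j : Fin (p + q) => (j : ℕ) < p), g j =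
      ∏ j : Fin p, g (Fin.castAdd q j) := by
    intro g
    rw [Finset.prod_filter, Fin.prod_univ_add]
    simp
  have P2 : ∀ g : Fin (p + q) → ℂ, ∏ j ∈ Finset.univ.filter (fun j : Fin (p + q) => p ≤ (j : ℕ)), g j =
      ∏ j : Fin q, g (Fin.natAdd p j) := by
    intro g
    rw [Finset.prod_filter, Fin.prod_univ_add]
    simp [fun x : Fin p => not_le.2 x.2]
  have P3 : ∀ g : Fin (p + q) → ℂ, ∑ j ∈ Finset.univ.filter (fun j : Fin (p + q) => p ≤ (j : ℕ)), g j =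
      ∑ j : Fin q, g (Fin.natAdd p j) := by
    intro g
    rw [Finset.sum_filter, Fin.sum_univ_add]
    simp [fun x : Fin p => not_le.2 x.2]
  simp only [P1, P2, P3]
  set x : Fin (q + t) → ℂ := Fin.append (fun l => Complex.exp (-φ (Fin.natAdd p l))) (fun _ => 0) with hxdef
  set y : Fin p → ℂ := fun j => Complex.exp (φ (Fin.castAdd q j)) with hydef
  have hx : ∀ i, ‖x i‖ < 1 := by
    intro i
    refine Fin.addCases (fun l => ?_) (fun l => ?_) i
    · have := hφpos (Fin.natAdd p l) (by simp)
      simp [hxdef, Complex.norm_exp, this]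
    · simp [hxdef]
  have hy : ∀ j, ‖y j‖ < 1 := by
    intro j
    have := hφneg (Fin.castAdd q j) (by simp)
    simp [hydef, Complex.norm_exp, this]
  have hc := core μ x y hx hy
  have key : ∀ u : Matrix.unitaryGroup (Fin (q + t)) ℂ,
      ∏ l : Fin q, (Matrix.det (Complex.exp (φ (Fin.natAdd p l)) • (1 : Matrix (Fin (q + t)) (Fin (q + t)) ℂ) -
            (u : Matrix (Fin (q + t)) (Fin (q + t)) ℂ).map (starRingEnd ℂ)))⁻¹ =
      Complex.exp (-((q + t : ℕ) : ℂ) * ∑ l : Fin q, φ (Fin.natAdd p l)) *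
        ∏ i, (det (1 - x i • star (u : Matrix (Fin (q + t)) (Fin (q + t)) ℂ)))⁻¹ := by
    intro u
    rw [Fin.prod_univ_add]
    simp only [hxdef, Fin.append_left, Fin.append_right, zero_smul, sub_zero, det_one, inv_one,
      Finset.prod_const_one, mul_one]
    rw [Finset.mul_sum, Complex.exp_sum, ← Finset.prod_mul_distrib]
    refine Finset.prod_congr rfl fun l _ => ?_
    have e1 : Complex.exp (φ (Fin.natAdd p l)) • (1 : Matrix (Fin (q + t)) (Fin (q + t)) ℂ) -
            (u : Matrix (Fin (q + t)) (Fin (q + t)) ℂ).map (starRingEnd ℂ) =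
        Complex.exp (φ (Fin.natAdd p l)) • (1 - Complex.exp (-φ (Fin.natAdd p l)) • star (u : Matrix (Fin (q + t)) (Fin (q + t)) ℂ))ᵀ := by
      have e2 : (star (u : Matrix (Fin (q + t)) (Fin (q + t)) ℂ))ᵀ = (u : Matrix (Fin (q + t)) (Fin (q + t)) ℂ).map (starRingEnd ℂ) := by
        ext i j; rfl
      rw [transpose_sub, transpose_one, transpose_smul, e2, smul_sub, smul_smul, ← Complex.exp_add]
      simp
    rw [e1, det_smul, det_transpose, mul_inv, Fintype.card_fin, ← Complex.exp_nat_mul, ← Complex.exp_neg, neg_mul]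
  simp only [key]
  have e3 : ∀ u : Matrix.unitaryGroup (Fin (q + t)) ℂ,
      (∏ j : Fin p, (det (1 - Complex.exp (φ (Fin.castAdd q j)) • (u : Matrix (Fin (q + t)) (Fin (q + t)) ℂ)))⁻¹) *
      (Complex.exp (-((q + t : ℕ) : ℂ) * ∑ l : Fin q, φ (Fin.natAdd p l)) *
        ∏ i, (det (1 - x i • star (u : Matrix (Fin (q + t)) (Fin (q + t)) ℂ)))⁻¹) =
      Complex.exp (-((q + t : ℕ) : ℂ) * ∑ l : Fin q, φ (Fin.natAdd p l)) *
      ((∏ j : Fin p, (det (1 - y j • (u : Matrix (Fin (q + t)) (Fin (q + t)) ℂ)))⁻¹) *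
        ∏ i, (det (1 - x i • star (u : Matrix (Fin (q + t)) (Fin (q + t)) ℂ)))⁻¹) := by
    intro u; rw [hydef]; ring
  simp only [e3]
  rw [integral_const_mul, hc]
  congr 1
  refine Finset.prod_congr rfl fun j _ => ?_
  rw [Fin.prod_univ_add]
  simp [hxdef, hydef, sub_eq_add_neg, Complex.exp_add]
end

section
/- If g and h are two n×n complex matrices such that s − g†sg and s − h†sh are both positive definite, then s − (gh)†s(gh) is positive definite; that is, the set H_{p,q} is a semigroup under matrix multiplication. -/
open Matrix
open scoped ComplexOrder

/-- The signature matrix `s = diag(1,…,1,−1,…,−1)` with `p` entries `+1` and `q`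
entries `−1`. -/
noncomputable def sMat (p q : ℕ) : Matrix (Fin (p + q)) (Fin (p + q)) ℂ :=
  Matrix.diagonal (fun i => if (i : ℕ) < p then 1 else -1)

/-- The set `H_{p,q} = {h : s − h†sh > 0}` is a semigroup under matrix
multiplication. -/
theorem Hpq_mul_mem (p q : ℕ) (hp : 1 ≤ p) (hq : 1 ≤ q)
    (g h : Matrix (Fin (p + q)) (Fin (p + q)) ℂ)
    (hg : (sMat p q - gᴴ * sMat p q * g).PosDef)
    (hh : (sMat p q - hᴴ * sMat p q * h).PosDef) :
    (sMat p q - (g * h)ᴴ * sMat p q * (g * h)).PosDef := by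
  have e : sMat p q - (g * h)ᴴ * sMat p q * (g * h) =
      (sMat p q - hᴴ * sMat p q * h) + hᴴ * (sMat p q - gᴴ * sMat p q * g) * h := by
    rw [Matrix.conjTranspose_mul]
    noncomm_ring
  rw [e]
  exact hh.add_posSemidef (hg.posSemidef.conjTranspose_mul_mul_same h)
end

section
/- If h is an n×n complex matrix such that s − h†sh is positive definite (i.e. h ∈ H_{p,q}), then h has no eigenvalue equal to 1; in particular the matrix 1_n − h is invertible. -/
open Matrix
open scoped ComplexOrder

/-- An element `h ∈ H_{p,q}` has no eigenvalue equal to `1`; in particular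
`1 − h` is invertible. -/
theorem Hpq_one_sub_invertible (p q : ℕ) (hp : 1 ≤ p) (hq : 1 ≤ q)
    (h : Matrix (Fin (p + q)) (Fin (p + q)) ℂ)
    (hh : (sMat p q - hᴴ * sMat p q * h).PosDef) :
    (∀ v : Fin (p + q) → ℂ, h *ᵥ v = v → v = 0) ∧ IsUnit (1 - h) := by
  have key : ∀ v : Fin (p + q) → ℂ, h *ᵥ v = v → v = 0 := by
    intro v hv
    by_contra hne
    have h1 := hh.dotProduct_mulVec_pos hne
    have h2 : star v ᵥ* hᴴ = star v := by
      rw [← Matrix.star_mulVec, hv]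
    rw [Matrix.sub_mulVec, ← Matrix.mulVec_mulVec, hv, ← Matrix.mulVec_mulVec, dotProduct_sub,
      Matrix.dotProduct_mulVec (star v) hᴴ, h2, sub_self] at h1
    exact lt_irrefl _ h1
  refine ⟨key, ?_⟩
  rw [← Matrix.mulVec_injective_iff_isUnit]
  intro a b hab
  have h3 : (1 - h) *ᵥ (a - b) = 0 := by
    rw [Matrix.mulVec_sub]
    exact sub_eq_zero.mpr hab
  rw [Matrix.sub_mulVec, Matrix.one_mulVec] at h3
  exact sub_eq_zero.mp (key _ (sub_eq_zero.mp h3).symm)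
end

section
/- Let h ∈ H_{p,q} and set a_h = s(1_n + h)(1_n − h)^{-1}. Then a_h + s = 2s(1_n − h)^{-1}, the Hermitian matrix a_h + a_h† is positive definite, and det(a_h + s) ≠ 0; in other words, a_h ∈ ζ_s^+. -/
open Matrix
open scoped ComplexOrder

/-- For `h ∈ H_{p,q}`, the Cayley transform `a_h = s(1+h)(1−h)⁻¹` satisfies
`a_h + s = 2s(1−h)⁻¹`, `a_h + a_h†` is positive definite and `det(a_h + s) ≠ 0`,
i.e. `a_h ∈ ζ_s⁺`. -/
theorem cayley_mem_zeta (p q : ℕ) (hp : 1 ≤ p) (hq : 1 ≤ q)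
    (h : Matrix (Fin (p + q)) (Fin (p + q)) ℂ)
    (hh : (sMat p q - hᴴ * sMat p q * h).PosDef) :
    sMat p q * (1 + h) * (1 - h)⁻¹ + sMat p q = (2 : ℂ) • (sMat p q * (1 - h)⁻¹) ∧
    (sMat p q * (1 + h) * (1 - h)⁻¹ + (sMat p q * (1 + h) * (1 - h)⁻¹)ᴴ).PosDef ∧
    (sMat p q * (1 + h) * (1 - h)⁻¹ + sMat p q).det ≠ 0 := by
  have hsH : (sMat p q)ᴴ = sMat p q := by
    rw [sMat, Matrix.diagonal_conjTranspose]
    congr 1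
    funext i
    simp only [Pi.star_apply]
    split_ifs <;> simp
  have hsdet : (sMat p q).det ≠ 0 := by
    rw [sMat, Matrix.det_diagonal, Finset.prod_ne_zero_iff]
    intro i _
    split_ifs <;> simp
  generalize sMat p q = s at *
  have hdet : (1 - h).det ≠ 0 := by
    intro h0
    obtain ⟨v, hv, hv0⟩ := Matrix.exists_mulVec_eq_zero_iff.mpr h0
    have hv1 : h *ᵥ v = v := by
      rw [Matrix.sub_mulVec, Matrix.one_mulVec, sub_eq_zero] at hv0
      exact hv0.symm
    have hpos := hh.dotProduct_mulVec_pos hv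
    have : star v ⬝ᵥ ((s - hᴴ * s * h) *ᵥ v) = 0 := by
      rw [Matrix.sub_mulVec, dotProduct_sub, ← Matrix.mulVec_mulVec, hv1,
        ← Matrix.mulVec_mulVec, Matrix.dotProduct_mulVec (star v) hᴴ, ← Matrix.star_mulVec, hv1,
        sub_self]
    rw [this] at hpos
    exact lt_irrefl _ hpos
  have hu : IsUnit (1 - h).det := isUnit_iff_ne_zero.mpr hdet
  have hDB : (1 - h) * (1 - h)⁻¹ = 1 := Matrix.mul_nonsing_inv _ hu
  have hBD : (1 - h)⁻¹ * (1 - h) = 1 := Matrix.nonsing_inv_mul _ hu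
  generalize (1 - h)⁻¹ = B at *
  have hhB : h * B = B - 1 := by
    rw [← hDB]; noncomm_ring
  have hBh : Bᴴ * hᴴ = Bᴴ - 1 := by
    rw [← Matrix.conjTranspose_mul, hhB]; simp
  have hBh' : (h * B)ᴴ = Bᴴ - 1 := by rw [hhB]; simp
  have e0 : s * (1 + h) * B = (2 : ℂ) • (s * B) - s := by
    rw [mul_assoc, add_mul, hhB, two_smul]; noncomm_ring
  have e1 : s * (1 + h) * B + s = (2 : ℂ) • (s * B) := by
    rw [e0]; simp
  refine ⟨e1, ?_, ?_⟩
  · have e2 : s * (1 + h) * B + (s * (1 + h) * B)ᴴ = (2 : ℂ) • (Bᴴ * (s - hᴴ * s * h) * B) := by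
      have e3 : Bᴴ * (s - hᴴ * s * h) * B = Bᴴ * s * B - (Bᴴ * hᴴ) * s * (h * B) := by
        noncomm_ring
      rw [e3, hBh, hhB, e0]
      simp only [Matrix.conjTranspose_sub, Matrix.conjTranspose_add, Matrix.conjTranspose_mul, hsH,
        two_smul]
      noncomm_ring
    rw [e2]
    refine Matrix.PosDef.smul ?_ (by norm_num)
    refine hh.conjTranspose_mul_mul_same ?_
    intro x y hxy
    have := congrArg (fun z => (1 - h) *ᵥ z) hxy
    simpa [Matrix.mulVec_mulVec, hDB] using this
  · rw [e1, Matrix.det_smul, Matrix.det_mul]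
    have hB : B.det ≠ 0 := by
      intro hB
      have := congrArg Matrix.det hDB
      simp [hB] at this
    exact mul_ne_zero (pow_ne_zero _ two_ne_zero) (mul_ne_zero hsdet hB)
end

section
/- The set ζ_s^+ = {X an n×n complex matrix : X + X† is positive definite and det(X + s) ≠ 0} is a connected subset of the space of n×n complex matrices. -/
open Matrix
open scoped ComplexOrder

lemma aux_det {n : ℕ} (M : Matrix (Fin n) (Fin n) ℂ) (h : (M + Mᴴ).PosDef) : M.det ≠ 0 := by
  intro h0
  obtain ⟨v, hv, hMv⟩ := Matrix.exists_mulVec_eq_zero_iff.mpr h0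
  have h1 := h.dotProduct_mulVec_pos hv
  rw [Matrix.add_mulVec, hMv, zero_add, Matrix.dotProduct_mulVec, ← Matrix.star_mulVec, hMv] at h1
  simp at h1

lemma aux_add {n : ℕ} (A : Matrix (Fin n) (Fin n) ℂ) (h : (A + Aᴴ).PosDef) (z : ℂ) (hz : 0 ≤ z.re) :
    ((A + Matrix.scalar (Fin n) z) + (A + Matrix.scalar (Fin n) z)ᴴ).PosDef := by
  have h2 : (A + Matrix.scalar (Fin n) z) + (A + Matrix.scalar (Fin n) z)ᴴ
      = (A + Aᴴ) + Matrix.diagonal (fun _ => ((2 * z.re : ℝ) : ℂ)) := by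
    rw [Matrix.conjTranspose_add, Matrix.scalar_apply, Matrix.diagonal_conjTranspose,
      add_add_add_comm, Matrix.diagonal_add]
    congr 2
    ext i
    simp [Complex.add_conj]
  rw [h2]
  refine h.add_posSemidef (Matrix.PosSemidef.diagonal ?_)
  intro i
  have : 0 ≤ 2 * z.re := by positivity
  exact Complex.zero_le_real.mpr this

lemma aux_s (p q : ℕ) (A : Matrix (Fin (p + q)) (Fin (p + q)) ℂ) (h : (A + Aᴴ).PosDef)
    (z : ℂ) (hz : 1 ≤ z.re) :
    ((A + Matrix.scalar _ z + sMat p q) + (A + Matrix.scalar _ z + sMat p q)ᴴ).PosDef := by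
  have h1 := aux_add A h (z - 1) (by simpa using hz)
  have h2 : (A + Matrix.scalar _ z + sMat p q) + (A + Matrix.scalar _ z + sMat p q)ᴴ
    = ((A + Matrix.scalar _ (z-1)) + (A + Matrix.scalar _ (z-1))ᴴ)
      + Matrix.diagonal (fun i : Fin (p + q) => if (i : ℕ) < p then (4 : ℂ) else 0) := by
    have h3 : Matrix.diagonal (fun i : Fin (p + q) => if (i : ℕ) < p then (4 : ℂ) else 0)
      = (1 + sMat p q) + (1 + sMat p q)ᴴ := by
      rw [sMat, ← Matrix.diagonal_one, Matrix.diagonal_add, Matrix.diagonal_conjTranspose,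
        Matrix.diagonal_add]
      congr 1
      ext i
      by_cases hi : (i : ℕ) < p <;> simp [hi]
      norm_num
    rw [h3, map_sub, map_one]
    simp only [Matrix.conjTranspose_add, Matrix.conjTranspose_sub, Matrix.conjTranspose_one]
    abel
  rw [h2]
  refine h1.add_posSemidef (Matrix.PosSemidef.diagonal ?_)
  intro i
  by_cases hi : (i : ℕ) < p <;> simp [hi]

lemma aux_convex {n : ℕ} (S : Matrix (Fin n) (Fin n) ℂ) :
    Convex ℝ {X : Matrix (Fin n) (Fin n) ℂ | ((X + S) + (X + S)ᴴ).PosDef} := by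
  rw [convex_iff_forall_pos]
  intro X hX Y hY a b ha hb hab
  simp only [Set.mem_setOf_eq] at *
  have h2 : (a • X + b • Y + S) + (a • X + b • Y + S)ᴴ
      = a • ((X + S) + (X + S)ᴴ) + b • ((Y + S) + (Y + S)ᴴ) := by
    have hS : S + Sᴴ = (a + b) • (S + Sᴴ) := by rw [hab, one_smul]
    have : (a • X + b • Y + S) + (a • X + b • Y + S)ᴴ
      = a • (X + Xᴴ) + b • (Y + Yᴴ) + (S + Sᴴ) := by
      simp only [Matrix.conjTranspose_add, Matrix.conjTranspose_smul, star_trivial, smul_add]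
      abel
    rw [this, hS]
    simp only [Matrix.conjTranspose_add, smul_add, add_smul]
    abel
  rw [h2]
  exact (hX.smul ha).add (hY.smul hb)

lemma aux_path (p q : ℕ) (X : Matrix (Fin (p + q)) (Fin (p + q)) ℂ) (hX : (X + Xᴴ).PosDef)
    (hd : (X + sMat p q).det ≠ 0) : ∃ c : ℝ, ∀ t : ℝ,
      (X + Matrix.scalar _ ((t : ℂ) * (1 + c * Complex.I)) + sMat p q).det ≠ 0 := by
  obtain ⟨c, hc⟩ := Infinite.exists_notMem_finset
    ((-(X + sMat p q)).charpoly.roots.toFinset.image (fun r => r.im / r.re))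
  refine ⟨c, fun t h0 => hc ?_⟩
  have ht : t ≠ 0 := by
    rintro rfl
    apply hd
    simpa using h0
  refine Finset.mem_image.mpr ⟨(t : ℂ) * (1 + c * Complex.I), ?_, ?_⟩
  · rw [Multiset.mem_toFinset, Polynomial.mem_roots (Matrix.charpoly_monic _).ne_zero,
      Polynomial.IsRoot, Matrix.eval_charpoly, ← h0]
    congr 1
    abel
  · simp
    field_simp

theorem zeta_isConnected (p q : ℕ) (hp : 1 ≤ p) (hq : 1 ≤ q) :
    IsConnected {X : Matrix (Fin (p + q)) (Fin (p + q)) ℂ |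
      (X + Xᴴ).PosDef ∧ (X + sMat p q).det ≠ 0} := by
  set F := {X : Matrix (Fin (p + q)) (Fin (p + q)) ℂ |
      (X + Xᴴ).PosDef ∧ (X + sMat p q).det ≠ 0} with hF
  let G := {X : Matrix (Fin (p + q)) (Fin (p + q)) ℂ | ((X + 0) + (X + 0)ᴴ).PosDef} ∩
    {X : Matrix (Fin (p + q)) (Fin (p + q)) ℂ | ((X + sMat p q) + (X + sMat p q)ᴴ).PosDef}
  have hG : Convex ℝ G := (aux_convex _).inter (aux_convex _)
  have hGF : G ⊆ F := fun X hX => ⟨by simpa using hX.1, aux_det _ hX.2⟩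
  have key : ∀ X : Matrix (Fin (p + q)) (Fin (p + q)) ℂ, (X + Xᴴ).PosDef → ∀ z : ℂ, 1 ≤ z.re →
      X + Matrix.scalar _ z ∈ G := fun X hX z hz =>
    ⟨by simpa using aux_add X hX z (by linarith), aux_s p q X hX z hz⟩
  have h1 : ((1 : Matrix (Fin (p + q)) (Fin (p + q)) ℂ) + 1ᴴ).PosDef := by
    rw [Matrix.conjTranspose_one]
    exact Matrix.PosDef.one.add Matrix.PosDef.one
  have hx0 := key 1 h1 1 (by simp)
  refine IsPathConnected.isConnected ⟨_, hGF hx0, fun {X} hX => ?_⟩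
  obtain ⟨c, hc⟩ := aux_path p q X hX.1 hX.2
  have hy := key X hX.1 (1 + c * Complex.I) (by simp)
  have j1 : JoinedIn F (1 + Matrix.scalar _ 1) (X + Matrix.scalar _ (1 + c * Complex.I)) :=
    ((hG.isPathConnected ⟨_, hx0⟩).joinedIn _ hx0 _ hy).mono hGF
  refine j1.trans (JoinedIn.symm ?_)
  refine JoinedIn.of_segment_subset ?_
  rw [segment_eq_image']
  rintro _ ⟨t, ht, rfl⟩
  have e : X + t • (X + Matrix.scalar _ (1 + c * Complex.I) - X)
      = X + Matrix.scalar _ ((t : ℂ) * (1 + c * Complex.I)) := by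
    rw [add_sub_cancel_left]
    congr 1
    ext i j
    by_cases hij : i = j <;> simp [hij, mul_add]
  have e' : X + Matrix.scalar _ ((t : ℂ) * (1 + c * Complex.I)) ∈ F :=
    ⟨aux_add X hX.1 _ (by simpa using ht.1), hc t⟩
  rw [← e] at e'
  exact e'
end

section
/- The set H_{p,q} = {h an n×n complex matrix : s − h†sh is positive definite} is a connected subset of the space of n×n complex matrices. -/
open Matrix
open scoped ComplexOrder

namespace HpqAux

noncomputable def qA (p q : ℕ) (v : Fin (p + q) → ℂ) : ℝ :=
  ∑ i : Fin (p + q), if (i : ℕ) < p then Complex.normSq (v i) else 0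

noncomputable def qB (p q : ℕ) (v : Fin (p + q) → ℂ) : ℝ :=
  ∑ i : Fin (p + q), if (i : ℕ) < p then 0 else Complex.normSq (v i)

noncomputable def qN (p q : ℕ) (v : Fin (p + q) → ℂ) : ℝ :=
  ∑ i, Complex.normSq (v i)

noncomputable def E (p q : ℕ) (t : ℝ) : Matrix (Fin (p + q)) (Fin (p + q)) ℂ :=
  Matrix.diagonal (fun i => if (i : ℕ) < p then (t : ℂ) else 1)

variable {p q : ℕ}

lemma qA_nonneg (v : Fin (p + q) → ℂ) : 0 ≤ qA p q v :=
  Finset.sum_nonneg fun i _ => by split_ifs <;> simp [Complex.normSq_nonneg]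

lemma qB_nonneg (v : Fin (p + q) → ℂ) : 0 ≤ qB p q v :=
  Finset.sum_nonneg fun i _ => by split_ifs <;> simp [Complex.normSq_nonneg]

lemma qAB (v : Fin (p + q) → ℂ) : qA p q v + qB p q v = qN p q v := by
  unfold qA qB qN
  rw [← Finset.sum_add_distrib]
  exact Finset.sum_congr rfl fun i _ => by split_ifs <;> simp

lemma qN_pos {v : Fin (p + q) → ℂ} (hv : v ≠ 0) : 0 < qN p q v := by
  obtain ⟨i, hi⟩ := Function.ne_iff.mp hv
  exact Finset.sum_pos' (fun i _ => Complex.normSq_nonneg _)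
    ⟨i, Finset.mem_univ _, Complex.normSq_pos.mpr hi⟩

lemma qA_E (t : ℝ) (v : Fin (p + q) → ℂ) : qA p q (E p q t *ᵥ v) = t ^ 2 * qA p q v := by
  unfold qA E
  rw [Finset.mul_sum]
  refine Finset.sum_congr rfl fun i _ => ?_
  rw [mulVec_diagonal]
  split_ifs <;> simp [sq]

lemma qB_E (t : ℝ) (v : Fin (p + q) → ℂ) : qB p q (E p q t *ᵥ v) = qB p q v := by
  unfold qB E
  refine Finset.sum_congr rfl fun i _ => ?_
  rw [mulVec_diagonal]
  split_ifs <;> simp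

lemma qA_smul (t : ℝ) (v : Fin (p + q) → ℂ) : qA p q ((t : ℂ) • v) = t ^ 2 * qA p q v := by
  unfold qA
  rw [Finset.mul_sum]
  refine Finset.sum_congr rfl fun i _ => ?_
  split_ifs <;> simp [sq]

lemma qB_smul (t : ℝ) (v : Fin (p + q) → ℂ) : qB p q ((t : ℂ) • v) = t ^ 2 * qB p q v := by
  unfold qB
  rw [Finset.mul_sum]
  refine Finset.sum_congr rfl fun i _ => ?_
  split_ifs <;> simp [sq]

lemma qA_zero : qA p q 0 = 0 := by simp [qA]
lemma qB_zero : qB p q 0 = 0 := by simp [qB]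

lemma form_s (v : Fin (p + q) → ℂ) :
    star v ⬝ᵥ (sMat p q *ᵥ v) = ((qA p q v - qB p q v : ℝ) : ℂ) := by
  unfold qA qB sMat
  rw [← Finset.sum_sub_distrib, dotProduct, Complex.ofReal_sum]
  refine Finset.sum_congr rfl fun i _ => ?_
  rw [mulVec_diagonal]
  split_ifs <;> simp [Complex.normSq_eq_conj_mul_self]

lemma s_herm : (sMat p q).IsHermitian := by
  unfold sMat
  rw [Matrix.isHermitian_diagonal_iff]
  intro i
  split_ifs <;> simp [isSelfAdjoint_iff]

lemma mem_iff (h : Matrix (Fin (p + q)) (Fin (p + q)) ℂ) :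
    (sMat p q - hᴴ * sMat p q * h).PosDef ↔
      ∀ v, v ≠ 0 → qA p q (h *ᵥ v) - qB p q (h *ᵥ v) < qA p q v - qB p q v := by
  have key : ∀ v, star v ⬝ᵥ ((sMat p q - hᴴ * sMat p q * h) *ᵥ v) =
      (((qA p q v - qB p q v) - (qA p q (h *ᵥ v) - qB p q (h *ᵥ v)) : ℝ) : ℂ) := by
    intro v
    rw [Complex.ofReal_sub, ← form_s, ← form_s, sub_mulVec, dotProduct_sub, star_mulVec,
      ← dotProduct_mulVec, mulVec_mulVec, mulVec_mulVec, Matrix.mul_assoc]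
  rw [posDef_iff_dotProduct_mulVec]
  constructor
  · rintro ⟨-, H⟩ v hv
    have := H hv
    rw [key, Complex.zero_lt_real] at this
    linarith
  · intro H
    refine ⟨s_herm.sub (isHermitian_conjTranspose_mul_mul _ s_herm), fun v hv => ?_⟩
    rw [key, Complex.zero_lt_real]
    linarith [H v hv]

def S (p q : ℕ) : Set (Matrix (Fin (p + q)) (Fin (p + q)) ℂ) :=
  {h | ∀ v, v ≠ 0 → qA p q (h *ᵥ v) - qB p q (h *ᵥ v) < qA p q v - qB p q v}

lemma E_mem {h : Matrix (Fin (p + q)) (Fin (p + q)) ℂ} (hh : h ∈ S p q) {t : ℝ}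
    (ht : t ∈ Set.Icc (0 : ℝ) 1) : E p q t * h * E p q t ∈ S p q := by
  intro v hv
  have ht2 : t ^ 2 ≤ 1 := by nlinarith [ht.1, ht.2]
  rw [← mulVec_mulVec, ← mulVec_mulVec, qA_E, qB_E]
  have hA := qA_E t v
  have hB := qB_E t v
  have hN := qN_pos hv
  rw [← qAB] at hN
  have h0 := qA_nonneg v
  by_cases hz : E p q t *ᵥ v = 0
  · rw [hz] at hB ⊢
    rw [qB_zero] at hB
    rw [mulVec_zero, qA_zero, qB_zero]
    linarith
  · have := hh _ hz
    have h1 := qA_nonneg (h *ᵥ (E p q t *ᵥ v))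
    nlinarith

lemma E_one : E p q 1 = 1 := by simp [E]

lemma E_cont : Continuous (E p q) := by
  unfold E
  refine Continuous.matrix_diagonal (continuous_pi fun i => ?_)
  split_ifs <;> fun_prop

lemma P_sq : E p q 0 * E p q 0 = E p q 0 := by
  unfold E
  rw [diagonal_mul_diagonal]
  congr 1
  ext i
  split_ifs <;> simp

lemma smul_mem {h : Matrix (Fin (p + q)) (Fin (p + q)) ℂ} (hh : E p q 0 * h * E p q 0 ∈ S p q)
    {r : ℝ} (hr : 1 ≤ r) : (r : ℂ) • (E p q 0 * h * E p q 0) ∈ S p q := by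
  intro v hv
  have := hh v hv
  rw [smul_mulVec, qA_smul, qB_smul]
  rw [← mulVec_mulVec, ← mulVec_mulVec, qA_E, qB_E] at *
  have h3 := qB_nonneg (h *ᵥ (E p q 0 *ᵥ v))
  have h4 : 0 ≤ (r ^ 2 - 1) * qB p q (h *ᵥ (E p q 0 *ᵥ v)) :=
    mul_nonneg (by nlinarith) h3
  nlinarith

noncomputable def D (h : Matrix (Fin (p + q)) (Fin (p + q)) ℂ) (z : ℂ) :
    Matrix (Fin (p + q)) (Fin (p + q)) ℂ :=
  (1 - E p q 0 + E p q 0 * h * E p q 0) + z • (E p q 0 - E p q 0 * h * E p q 0)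

noncomputable def fro (M : Matrix (Fin (p + q)) (Fin (p + q)) ℂ) : ℝ :=
  ∑ i, ∑ j, Complex.normSq (M i j)

lemma fro_nonneg (M : Matrix (Fin (p + q)) (Fin (p + q)) ℂ) : 0 ≤ fro M :=
  Finset.sum_nonneg fun i _ => Finset.sum_nonneg fun j _ => Complex.normSq_nonneg _

lemma fro_bound (M : Matrix (Fin (p + q)) (Fin (p + q)) ℂ) (v : Fin (p + q) → ℂ) :
    qN p q (M *ᵥ v) ≤ fro M * qN p q v := by
  unfold qN fro
  rw [Finset.sum_mul]
  refine Finset.sum_le_sum fun i _ => ?_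
  simp only [Complex.normSq_eq_norm_sq]
  calc ‖(M *ᵥ v) i‖ ^ 2 ≤ (∑ j, ‖M i j‖ * ‖v j‖) ^ 2 := by
        gcongr
        refine (norm_sum_le Finset.univ (fun j => M i j * v j)).trans (le_of_eq ?_)
        simp
    _ ≤ _ := Finset.sum_mul_sq_le_sq_mul_sq _ _ _

lemma PD (h : Matrix (Fin (p + q)) (Fin (p + q)) ℂ) (z : ℂ) :
    E p q 0 * D h z = D h z * E p q 0 := by
  have h1 : E p q 0 * (E p q 0 * h * E p q 0) = E p q 0 * h * E p q 0 := by
    rw [← Matrix.mul_assoc, ← Matrix.mul_assoc, P_sq]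
  have h2 : (E p q 0 * h * E p q 0) * E p q 0 = E p q 0 * h * E p q 0 := by
    rw [Matrix.mul_assoc, P_sq]
  unfold D
  simp only [Matrix.mul_add, Matrix.add_mul, Matrix.mul_sub, Matrix.sub_mul, Matrix.mul_smul,
    Matrix.smul_mul, P_sq, h1, h2, Matrix.mul_one, Matrix.one_mul]

lemma PD_zero (h : Matrix (Fin (p + q)) (Fin (p + q)) ℂ) :
    E p q 0 * D h 0 = E p q 0 * h * E p q 0 := by
  have h1 : E p q 0 * (E p q 0 * h * E p q 0) = E p q 0 * h * E p q 0 := by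
    rw [← Matrix.mul_assoc, ← Matrix.mul_assoc, P_sq]
  simp [D, Matrix.mul_add, Matrix.mul_sub, P_sq, h1]

lemma D_one (h : Matrix (Fin (p + q)) (Fin (p + q)) ℂ) : D h 1 = 1 := by
  simp [D]

lemma D_zero_det {h : Matrix (Fin (p + q)) (Fin (p + q)) ℂ}
    (hh : E p q 0 * h * E p q 0 ∈ S p q) : (D h 0).det ≠ 0 := by
  intro hd
  obtain ⟨v, hv, hz⟩ := Matrix.exists_mulVec_eq_zero_iff.mpr hd
  have h1 := hh v hv
  rw [← PD_zero, ← mulVec_mulVec, hz, mulVec_zero, qA_zero, qB_zero] at h1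
  have h2 : v = E p q 0 *ᵥ v - (E p q 0 * h * E p q 0) *ᵥ v := by
    have : D h 0 *ᵥ v = v - E p q 0 *ᵥ v + (E p q 0 * h * E p q 0) *ᵥ v := by
      simp [D, add_mulVec, sub_mulVec]
    rw [hz] at this
    linear_combination (exp := 1) -this
  have h3 : E p q 0 *ᵥ v = v := by
    rw [← PD_zero, ← mulVec_mulVec, hz, mulVec_zero, sub_zero] at h2
    exact h2.symm
  have h4 := qA_E 0 v
  rw [h3] at h4
  have := qB_nonneg v
  nlinarith

lemma D_mem (h : Matrix (Fin (p + q)) (Fin (p + q)) ℂ) {z : ℂ} (hz : (D h z).det ≠ 0) :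
    ((1 + fro (D h z)⁻¹ : ℝ) : ℂ) • (E p q 0 * D h z) ∈ S p q := by
  intro v hv
  have hN := qN_pos hv
  rw [← qAB] at hN
  rw [smul_mulVec, qA_smul, qB_smul]
  set c := fro (D h z)⁻¹
  have hc : 0 ≤ c := fro_nonneg _
  have e1 : qA p q ((E p q 0 * D h z) *ᵥ v) = 0 := by
    rw [← mulVec_mulVec, qA_E]; ring
  have hb := fro_bound (D h z)⁻¹ ((E p q 0 * D h z) *ᵥ v)
  rw [← qAB ((E p q 0 * D h z) *ᵥ v), e1, PD, mulVec_mulVec, ← Matrix.mul_assoc,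
    Matrix.nonsing_inv_mul _ (isUnit_iff_ne_zero.mpr hz), Matrix.one_mul, ← qAB, qA_E, qB_E,
    ← PD] at hb
  rw [e1]
  have hA := qA_nonneg v
  have hB := qB_nonneg v
  set x := qB p q ((E p q 0 * D h z) *ᵥ v)
  have hx : 0 ≤ x := qB_nonneg _
  change _ ≤ c * _ at hb
  rcases hB.eq_or_lt with h0 | h0
  · nlinarith [mul_nonneg (sq_nonneg (1 + c)) hx]
  · have : 0 < x := by
      rcases hx.eq_or_lt with h1 | h1
      · rw [← h1] at hb; nlinarith
      · exact h1
    nlinarith [mul_nonneg (sq_nonneg c) hx, mul_nonneg hc hx]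

lemma D_finite {h : Matrix (Fin (p + q)) (Fin (p + q)) ℂ} (hd : (D h 0).det ≠ 0) :
    {z : ℂ | (D h z).det = 0}.Finite := by
  classical
  let A := 1 - E p q 0 + E p q 0 * h * E p q 0
  let B := E p q 0 - E p q 0 * h * E p q 0
  let P : Polynomial ℂ := (A.map Polynomial.C + (Polynomial.X : Polynomial ℂ) •
    B.map Polynomial.C).det
  have hP : ∀ z, P.eval z = (D h z).det := by
    intro z
    change Polynomial.evalRingHom z (Matrix.det _) = _
    rw [RingHom.map_det]
    congr 1
    ext i j
    simp [D, A, B]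
  have hP0 : P ≠ 0 := by
    intro h0
    apply hd
    rw [← hP, h0, Polynomial.eval_zero]
  refine (P.roots.toFinset.finite_toSet).subset fun z hz => ?_
  simp only [Finset.mem_coe, Multiset.mem_toFinset]
  rw [Polynomial.mem_roots hP0, Polynomial.IsRoot, hP]
  exact hz

lemma D_cont (h : Matrix (Fin (p + q)) (Fin (p + q)) ℂ) : Continuous (D h) := by
  unfold D
  fun_prop

lemma f_cont (h : Matrix (Fin (p + q)) (Fin (p + q)) ℂ) :
    ContinuousOn (fun z => ((1 + fro (D h z)⁻¹ : ℝ) : ℂ) • (E p q 0 * D h z))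
      {z : ℂ | (D h z).det = 0}ᶜ := by
  have hi : ContinuousOn (fun z => (D h z)⁻¹) {z : ℂ | (D h z).det = 0}ᶜ := by
    intro z hz
    have h1 : ContinuousAt Inv.inv (D h z) := by
      apply continuousAt_matrix_inv
      rw [Ring.inverse_eq_inv']
      exact continuousAt_inv₀ hz
    exact (ContinuousAt.comp h1 (D_cont h).continuousAt).continuousWithinAt
  have hf : Continuous (fro (p := p) (q := q)) := by
    unfold fro
    refine continuous_finsetSum _ fun i _ => continuous_finsetSum _ fun j _ => ?_
    exact Complex.continuous_normSq.comp (continuous_id.matrix_elem i j)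
  have k1 : ContinuousOn (fun z => ((1 + fro (D h z)⁻¹ : ℝ) : ℂ)) {z : ℂ | (D h z).det = 0}ᶜ :=
    Complex.continuous_ofReal.comp_continuousOn
      (continuousOn_const.add (hf.comp_continuousOn hi))
  have k2 : ContinuousOn (fun z => E p q 0 * D h z) {z : ℂ | (D h z).det = 0}ᶜ :=
    (continuous_const.mul (D_cont h)).continuousOn
  exact k1.smul k2

lemma icc_path {a b : ℝ} (hab : a ≤ b) : IsPathConnected (Set.Icc a b) :=
  (convex_Icc a b).isPathConnected ⟨a, Set.left_mem_Icc.mpr hab⟩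

lemma joined {h : Matrix (Fin (p + q)) (Fin (p + q)) ℂ} (hh : h ∈ S p q) :
    JoinedIn (S p q) h
      (((1 + fro (1 : Matrix (Fin (p + q)) (Fin (p + q)) ℂ)⁻¹ : ℝ) : ℂ) • E p q 0) := by
  have h0 : E p q 0 * h * E p q 0 ∈ S p q := E_mem hh (by simp)
  have hd := D_zero_det h0
  have j1 : JoinedIn (S p q) h (E p q 0 * h * E p q 0) := by
    have hc : Continuous fun t : ℝ => E p q t * h * E p q t :=
      (E_cont.mul continuous_const).mul E_cont
    refine (((icc_path zero_le_one).image hc).joinedIn _ ⟨1, by simp, ?_⟩ _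
      ⟨0, by simp, rfl⟩).mono ?_
    · simp [E_one]
    · rintro _ ⟨t, ht, rfl⟩
      exact E_mem hh ht
  have j2 : JoinedIn (S p q) (E p q 0 * h * E p q 0)
      (((1 + fro (D h 0)⁻¹ : ℝ) : ℂ) • (E p q 0 * D h 0)) := by
    have hr : (1 : ℝ) ≤ 1 + fro (D h 0)⁻¹ := by linarith [fro_nonneg (D h 0)⁻¹]
    have hc : Continuous fun t : ℝ => (t : ℂ) • (E p q 0 * h * E p q 0) :=
      Complex.continuous_ofReal.smul continuous_const
    refine (((icc_path hr).image hc).joinedIn _ ⟨1, by simp [hr], ?_⟩ _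
      ⟨_, Set.right_mem_Icc.mpr hr, ?_⟩).mono ?_
    · simp
    · rw [PD_zero]
    · rintro _ ⟨t, ht, rfl⟩
      exact smul_mem h0 ht.1
  have j3 : JoinedIn (S p q) (((1 + fro (D h 0)⁻¹ : ℝ) : ℂ) • (E p q 0 * D h 0))
      (((1 + fro (1 : Matrix (Fin (p + q)) (Fin (p + q)) ℂ)⁻¹ : ℝ) : ℂ) • E p q 0) := by
    have hpc := (D_finite hd).countable.isPathConnected_compl_of_one_lt_rank
      (E := ℂ) (by rw [Complex.rank_real_complex]; norm_num)
    refine ((hpc.image' (f_cont h)).joinedIn _ ⟨0, hd, rfl⟩ _ ⟨1, ?_, ?_⟩).mono ?_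
    · simp [D_one]
    · simp [D_one]
    · rintro _ ⟨z, hz, rfl⟩
      exact D_mem h hz
  exact (j1.trans j2).trans j3

lemma base_mem : (((1 + fro (1 : Matrix (Fin (p + q)) (Fin (p + q)) ℂ)⁻¹ : ℝ) : ℂ) • E p q 0)
    ∈ S p q := by
  have := D_mem (p := p) (q := q) 1 (z := 1) (by simp [D_one])
  simpa [D_one] using this

end HpqAux

/-- **Corollary 5.4 (first part)**: the semigroup
`H_{p,q} = {h : s − h†sh > 0}` is connected. -/
theorem Hpq_isConnected (p q : ℕ) (hp : 1 ≤ p) (hq : 1 ≤ q) :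
    IsConnected {h : Matrix (Fin (p + q)) (Fin (p + q)) ℂ |
      (sMat p q - hᴴ * sMat p q * h).PosDef} := by
  have e : {h : Matrix (Fin (p + q)) (Fin (p + q)) ℂ |
      (sMat p q - hᴴ * sMat p q * h).PosDef} = HpqAux.S p q := by
    ext h
    exact HpqAux.mem_iff h
  rw [e]
  have hpc : IsPathConnected (HpqAux.S p q) :=
    ⟨_, HpqAux.base_mem, fun _ hy => (HpqAux.joined hy).symm⟩
  exact hpc.isConnected
end

section
/- If h is an n×n complex matrix such that s − h†sh is positive definite, then s − h s h† is positive definite as well; equivalently, the set H_{p,q} is closed under the operation h ↦ s h† s. -/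
open Matrix
open scoped ComplexOrder

theorem aux_split {n : ℕ} (s : Matrix (Fin n) (Fin n) ℂ) (s2 : s * s = 1)
    (y z : Fin n → ℂ) (h : (1 + s) *ᵥ y + (1 - s) *ᵥ z = 0) :
    s *ᵥ y = -y ∧ s *ᵥ z = z := by
  have h1 : s *ᵥ ((1 + s) *ᵥ y + (1 - s) *ᵥ z) = 0 := by rw [h, mulVec_zero]
  simp only [mulVec_add, mulVec_mulVec, mul_add, mul_sub, s2, mul_one] at h1
  simp only [add_mulVec, sub_mulVec, one_mulVec] at h h1
  constructor
  · funext i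
    have a := congrFun h i
    have b := congrFun h1 i
    simp only [Pi.add_apply, Pi.sub_apply, Pi.neg_apply, Pi.zero_apply] at a b ⊢
    linear_combination (a + b) / 2
  · funext i
    have a := congrFun h i
    have b := congrFun h1 i
    simp only [Pi.add_apply, Pi.sub_apply, Pi.neg_apply, Pi.zero_apply] at a b ⊢
    linear_combination (b - a) / 2

theorem aux_gen {n : ℕ} (s h : Matrix (Fin n) (Fin n) ℂ) (s2 : s * s = 1) (sH : sᴴ = s)
    (hh : (s - hᴴ * s * h).PosDef) : (s - h * s * hᴴ).PosDef := by
  have key : ∀ x : Fin n → ℂ, star x ⬝ᵥ ((s - hᴴ * s * h) *ᵥ x)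
      = star x ⬝ᵥ (s *ᵥ x) - star (h *ᵥ x) ⬝ᵥ (s *ᵥ (h *ᵥ x)) := by
    intro x
    rw [sub_mulVec, dotProduct_sub, star_mulVec, ← dotProduct_mulVec, mulVec_mulVec,
      mulVec_mulVec, mul_assoc]
  have hpos : ∀ x : Fin n → ℂ, x ≠ 0 →
      0 < star x ⬝ᵥ (s *ᵥ x) - star (h *ᵥ x) ⬝ᵥ (s *ᵥ (h *ᵥ x)) := by
    intro x hx
    rw [← key]
    exact hh.dotProduct_mulVec_pos hx
  have hinj : Function.Injective ((1 + s) + (1 - s) * h).mulVec := by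
    rw [← coe_mulVecLin, ← LinearMap.ker_eq_bot, LinearMap.ker_eq_bot']
    intro x hx
    by_contra hne
    rw [mulVecLin_apply, add_mulVec, ← mulVec_mulVec] at hx
    obtain ⟨h1, h2⟩ := aux_split s s2 _ _ hx
    have := hpos x hne
    rw [h1, h2, dotProduct_neg] at this
    have e1 := dotProduct_star_self_nonneg x
    have e2 := dotProduct_star_self_nonneg (h *ᵥ x)
    have e3 := add_nonneg e1 e2
    have e4 := add_pos_of_pos_of_nonneg this e3
    ring_nf at e4
    exact lt_irrefl _ e4
  have hsurj : Function.Surjective ((1 + s) + (1 - s) * h).mulVec :=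
    mulVec_surjective_iff_isUnit.2 (mulVec_injective_iff_isUnit.1 hinj)
  refine PosDef.of_dotProduct_mulVec_pos ?_ ?_
  · simp [IsHermitian, conjTranspose_mul, sH, mul_assoc]
  intro v hv
  set b := s *ᵥ v with hb
  set a := s *ᵥ (hᴴ *ᵥ v) with ha
  have sb : s *ᵥ b = v := by rw [hb, mulVec_mulVec, s2, one_mulVec]
  have sa : s *ᵥ a = hᴴ *ᵥ v := by rw [ha, mulVec_mulVec, s2, one_mulVec]
  have hb0 : b ≠ 0 := by
    intro h0
    rw [h0, mulVec_zero] at sb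
    exact hv sb.symm
  have adj : ∀ u w : Fin n → ℂ, star (s *ᵥ u) ⬝ᵥ w = star u ⬝ᵥ (s *ᵥ w) := by
    intro u w
    rw [star_mulVec, sH, ← dotProduct_mulVec]
  have adjh : ∀ u w : Fin n → ℂ, star (h *ᵥ u) ⬝ᵥ w = star u ⬝ᵥ (hᴴ *ᵥ w) := by
    intro u w
    rw [star_mulVec, ← dotProduct_mulVec]
  have adjh' : ∀ u w : Fin n → ℂ, star (hᴴ *ᵥ u) ⬝ᵥ w = star u ⬝ᵥ (h *ᵥ w) := by
    intro u w
    rw [star_mulVec, conjTranspose_conjTranspose, ← dotProduct_mulVec]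
  -- goal as - Q(a,b)
  have goal_eq : star v ⬝ᵥ ((s - h * s * hᴴ) *ᵥ v)
      = star b ⬝ᵥ (s *ᵥ b) - star a ⬝ᵥ (s *ᵥ a) := by
    rw [sub_mulVec, dotProduct_sub, sb, sa, hb, ha, adj, adj, adjh',
      ← mulVec_mulVec, ← mulVec_mulVec]
  rw [goal_eq]
  obtain ⟨x, hx⟩ := hsurj (-((1 + s) *ᵥ a + (1 - s) *ᵥ b))
  have hx' : (1 + s) *ᵥ (x + a) + (1 - s) *ᵥ (h *ᵥ x + b) = 0 := by
    rw [add_mulVec, ← mulVec_mulVec] at hx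
    rw [mulVec_add, mulVec_add, add_add_add_comm, hx, neg_add_cancel]
  obtain ⟨h1, h2⟩ := aux_split s s2 _ _ hx'
  have e1 := dotProduct_star_self_nonneg (x + a)
  have e2 := dotProduct_star_self_nonneg (h *ᵥ x + b)
  have ex : star (x + a) ⬝ᵥ (s *ᵥ (x + a)) - star (h *ᵥ x + b) ⬝ᵥ (s *ᵥ (h *ᵥ x + b))
    = (star x ⬝ᵥ (s *ᵥ x) - star (h *ᵥ x) ⬝ᵥ (s *ᵥ (h *ᵥ x)))
      + (star a ⬝ᵥ (s *ᵥ a) - star b ⬝ᵥ (s *ᵥ b)) := by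
    have c1 : star x ⬝ᵥ (s *ᵥ a) = star (h *ᵥ x) ⬝ᵥ (s *ᵥ b) := by
      rw [sa, sb, adjh]
    have c2 : star a ⬝ᵥ (s *ᵥ x) = star b ⬝ᵥ (s *ᵥ (h *ᵥ x)) := by
      rw [← adj, ← adj, sa, sb, adjh']
    simp only [star_add, mulVec_add, add_dotProduct, dotProduct_add]
    linear_combination c1 + c2
  rw [h1, h2, dotProduct_neg] at ex
  have fin_eq : star b ⬝ᵥ (s *ᵥ b) - star a ⬝ᵥ (s *ᵥ a)
      = (star x ⬝ᵥ (s *ᵥ x) - star (h *ᵥ x) ⬝ᵥ (s *ᵥ (h *ᵥ x)))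
        + (star (x + a) ⬝ᵥ (x + a) + star (h *ᵥ x + b) ⬝ᵥ (h *ᵥ x + b)) := by
    linear_combination ex
  rw [fin_eq]
  by_cases hx0 : x = 0
  · subst hx0
    simp only [mulVec_zero, dotProduct_zero, sub_zero, zero_add] at e1 e2 ⊢
    refine add_pos_of_nonneg_of_pos e1 ?_
    exact dotProduct_star_self_pos_iff.2 hb0
  · exact add_pos_of_pos_of_nonneg (hpos x hx0) (add_nonneg e1 e2)

/-- **Corollary 5.4 (second part)**: if `s − h†sh` is positive definite then so is
`s − hsh†`; i.e. `H_{p,q}` is closed under `h ↦ sh†s`. -/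
theorem Hpq_closed_under_star (p q : ℕ) (hp : 1 ≤ p) (hq : 1 ≤ q)
    (h : Matrix (Fin (p + q)) (Fin (p + q)) ℂ)
    (hh : (sMat p q - hᴴ * sMat p q * h).PosDef) :
    (sMat p q - h * sMat p q * hᴴ).PosDef := by
  refine aux_gen _ h ?_ ?_ hh
  · rw [sMat, diagonal_mul_diagonal, ← diagonal_one]
    congr 1
    funext i
    split_ifs <;> simp
  · rw [sMat, diagonal_conjTranspose]
    congr 1
    funext i
    simp only [Pi.star_apply]
    split_ifs <;> simp
end

section
/- Let h be an invertible n×n complex matrix with s − h†sh positive definite, and set m = h s h† s. Then m is diagonalizable by a pseudo-unitary transformation with positive real eigenvalues different from 1: there exist an n×n complex matrix g with g† s g = s and real numbers d_1, …, d_n with d_k > 0 and d_k ≠ 1 for all k, such that g^{-1} m g is the diagonal matrix with entries d_1, …, d_n. -/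
open Matrix
open scoped ComplexOrder

lemma inertia_le {n : Type*} [Fintype n] [DecidableEq n] (A : Matrix n n ℂ) (a b : n → ℝ)
    (hA : Aᴴ * Matrix.diagonal (fun i => (a i : ℂ)) * A = Matrix.diagonal (fun i => (b i : ℂ))) :
    Fintype.card {i // 0 < b i} ≤ Fintype.card {i // 0 < a i} := by
  classical
  let L : Matrix {i // 0 < a i} {i // 0 < b i} ℂ := A.submatrix Subtype.val Subtype.val
  have hinj : Function.Injective (Matrix.toLin' L) := by
    rw [← LinearMap.ker_eq_bot, LinearMap.ker_eq_bot']
    intro v hv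
    let w : n → ℂ := fun i => if hi : 0 < b i then v ⟨i, hi⟩ else 0
    have hw : ∀ i, 0 < a i → (A *ᵥ w) i = 0 := by
      intro i hi
      have h1 := congrFun hv ⟨i, hi⟩
      rw [Matrix.toLin'_apply] at h1
      simp only [Matrix.mulVec, dotProduct, Pi.zero_apply] at h1 ⊢
      rw [← h1, ← Fintype.sum_subtype_add_sum_subtype (fun i => 0 < b i)]
      rw [Finset.sum_congr rfl (g := fun j : {j // 0 < b j} => L ⟨i, hi⟩ j * v j),
        Finset.sum_eq_zero (s := (Finset.univ : Finset {j // ¬ 0 < b j})), add_zero]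
      · rintro ⟨j, hj⟩ _
        simp [w, hj]
      · rintro ⟨j, hj⟩ _
        simp [w, hj, L]
    have h2 : star w ⬝ᵥ ((Matrix.diagonal (fun i => (b i : ℂ))) *ᵥ w)
        = star (A *ᵥ w) ⬝ᵥ ((Matrix.diagonal (fun i => (a i : ℂ))) *ᵥ (A *ᵥ w)) := by
      rw [← hA, Matrix.star_mulVec, ← Matrix.dotProduct_mulVec, Matrix.mulVec_mulVec,
        Matrix.mulVec_mulVec, Matrix.mul_assoc]
    have h3 : ∀ (c : n → ℝ) (u : n → ℂ),
        star u ⬝ᵥ ((Matrix.diagonal (fun i => (c i : ℂ))) *ᵥ u)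
          = ((∑ i, c i * Complex.normSq (u i) : ℝ) : ℂ) := by
      intro c u
      simp only [dotProduct, Matrix.mulVec_diagonal, Pi.star_apply]
      push_cast
      refine Finset.sum_congr rfl fun i _ => ?_
      rw [Complex.normSq_eq_conj_mul_self]
      simp only [RCLike.star_def]
      ring
    rw [h3, h3, Complex.ofReal_inj] at h2
    have h4 : ∑ i, a i * Complex.normSq ((A *ᵥ w) i) ≤ 0 := by
      refine Finset.sum_nonpos fun i _ => ?_
      by_cases hi : 0 < a i
      · simp [hw i hi]
      · exact mul_nonpos_of_nonpos_of_nonneg (not_lt.1 hi) (Complex.normSq_nonneg _)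
    have h5 : ∀ i ∈ Finset.univ, 0 ≤ b i * Complex.normSq (w i) := by
      intro i _
      by_cases hi : 0 < b i
      · exact mul_nonneg hi.le (Complex.normSq_nonneg _)
      · simp [w, hi]
    have h6 := (Finset.sum_eq_zero_iff_of_nonneg h5).1
      (le_antisymm (h2 ▸ h4) (Finset.sum_nonneg h5))
    funext ⟨i, hi⟩
    have h7 := h6 i (Finset.mem_univ _)
    simpa [w, hi, hi.ne'] using h7
  have := LinearMap.finrank_le_finrank_of_injective hinj
  simpa using this

lemma inertia_eq {n : Type*} [Fintype n] [DecidableEq n] (A : Matrix n n ℂ) (a b : n → ℝ)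
    (ha : ∀ i, a i ≠ 0) (hb : ∀ i, b i ≠ 0)
    (hA : Aᴴ * Matrix.diagonal (fun i => (a i : ℂ)) * A = Matrix.diagonal (fun i => (b i : ℂ))) :
    Fintype.card {i // 0 < b i} = Fintype.card {i // 0 < a i} := by
  classical
  have h1 := inertia_le A a b hA
  have h2 := inertia_le A (fun i => - a i) (fun i => - b i) (by
    have e : ∀ c : n → ℝ, Matrix.diagonal (fun i => ((-c i : ℝ) : ℂ))
      = - Matrix.diagonal (fun i => (c i : ℂ)) := by
      intro c; ext i j; by_cases hij : i = j <;> simp [Matrix.diagonal, hij]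
    rw [e, e, ← hA, Matrix.mul_neg, Matrix.neg_mul])
  have e : ∀ c : n → ℝ, (∀ i, c i ≠ 0) →
      Fintype.card {i // 0 < - c i} = Fintype.card n - Fintype.card {i // 0 < c i} := by
    intro c hc
    rw [← Fintype.card_subtype_compl]
    refine Fintype.card_congr (Equiv.subtypeEquivRight fun i => ?_)
    have := hc i
    constructor
    · intro h; linarith
    · intro h; exact neg_pos.2 (lt_of_le_of_ne (not_lt.1 h) this)
  rw [e a ha, e b hb] at h2
  have h3 := Fintype.card_subtype_le (fun i => 0 < a i)
  have h4 := Fintype.card_subtype_le (fun i => 0 < b i)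
  omega

open scoped MatrixOrder Matrix.Norms.L2Operator in
lemma simul_diag {n : Type*} [Fintype n] [DecidableEq n] (P S : Matrix n n ℂ)
    (hP : P.PosDef) (hS : S.IsHermitian) :
    ∃ (C : Matrix n n ℂ) (l : n → ℝ), IsUnit C ∧ Cᴴ * P * C = 1 ∧
      Cᴴ * S * C = Matrix.diagonal (fun i => (l i : ℂ)) := by
  obtain ⟨R, hR⟩ : ∃ R : Matrix n n ℂ, P = Rᴴ * R :=
    CStarAlgebra.nonneg_iff_eq_star_mul_self.mp hP.posSemidef.nonneg
  have hRu : IsUnit R := by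
    have := hP.isUnit
    rw [Matrix.isUnit_iff_isUnit_det] at this ⊢
    rw [hR, Matrix.det_mul] at this
    exact isUnit_of_mul_isUnit_right this
  have hRd : IsUnit R.det := (Matrix.isUnit_iff_isUnit_det _).1 hRu
  have hT : (R⁻¹ᴴ * S * R⁻¹).IsHermitian := Matrix.isHermitian_conjTranspose_mul_mul _ hS
  let U : Matrix n n ℂ := hT.eigenvectorUnitary
  have hU : Uᴴ * U = 1 := Unitary.coe_star_mul_self hT.eigenvectorUnitary
  have hRR : R * R⁻¹ = 1 := Matrix.mul_nonsing_inv R hRd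
  have hRR' : R⁻¹ᴴ * Rᴴ = 1 := by rw [← Matrix.conjTranspose_mul, hRR, Matrix.conjTranspose_one]
  refine ⟨R⁻¹ * U, hT.eigenvalues, ?_, ?_, ?_⟩
  · refine IsUnit.mul (Matrix.isUnit_nonsing_inv_iff.2 hRu) ?_
    exact IsUnit.of_mul_eq_one_right _ hU
  · rw [hR, Matrix.conjTranspose_mul]
    calc Uᴴ * R⁻¹ᴴ * (Rᴴ * R) * (R⁻¹ * U) = Uᴴ * (R⁻¹ᴴ * Rᴴ) * (R * R⁻¹) * U := by
          simp only [Matrix.mul_assoc]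
      _ = 1 := by rw [hRR, hRR', Matrix.mul_one, Matrix.mul_one, hU]
  · have h1 := hT.spectral_theorem
    rw [Unitary.conjStarAlgAut_apply] at h1
    calc (R⁻¹ * U)ᴴ * S * (R⁻¹ * U) = Uᴴ * (R⁻¹ᴴ * S * R⁻¹) * U := by
          simp only [Matrix.mul_assoc, Matrix.conjTranspose_mul]
      _ = Uᴴ * (U * Matrix.diagonal (fun i => (hT.eigenvalues i : ℂ)) * Uᴴ) * U := by
          exact congrArg (fun X => Uᴴ * X * U) h1
      _ = (Uᴴ * U) * Matrix.diagonal (fun i => (hT.eigenvalues i : ℂ)) * (Uᴴ * U) := by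
          simp only [Matrix.mul_assoc]
      _ = _ := by rw [hU, Matrix.one_mul, Matrix.mul_one]

lemma perm_diag {n : Type*} [Fintype n] [DecidableEq n] (C S : Matrix n n ℂ) (l : n → ℂ)
    (σ : n ≃ n) (h : Cᴴ * S * C = Matrix.diagonal l) :
    (C.submatrix id σ)ᴴ * S * (C.submatrix id σ) = Matrix.diagonal (l ∘ σ) := by
  rw [← Matrix.submatrix_diagonal_equiv l σ, ← h]
  rfl

lemma diag_ne {n : Type*} [Fintype n] [DecidableEq n] (X : Matrix n n ℂ) (l : n → ℝ)
    (hX : IsUnit X) (h : X = Matrix.diagonal (fun i => (l i : ℂ))) : ∀ i, l i ≠ 0 := by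
  intro i hi
  rw [Matrix.isUnit_iff_isUnit_det, h, Matrix.det_diagonal, isUnit_iff_ne_zero,
    Finset.prod_ne_zero_iff] at hX
  exact hX i (Finset.mem_univ _) (by simp [hi])

theorem M0_diagonalizable_pseudoUnitary (p q : ℕ) (hp : 1 ≤ p) (hq : 1 ≤ q)
    (h : Matrix (Fin (p + q)) (Fin (p + q)) ℂ) (hinv : IsUnit h)
    (hh : (sMat p q - hᴴ * sMat p q * h).PosDef) :
    ∃ g : Matrix (Fin (p + q)) (Fin (p + q)) ℂ, gᴴ * sMat p q * g = sMat p q ∧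
      ∃ d : Fin (p + q) → ℝ, (∀ k, 0 < d k ∧ d k ≠ 1) ∧
        g⁻¹ * (h * sMat p q * hᴴ * sMat p q) * g =
          Matrix.diagonal (fun k => (d k : ℂ)) := by
  classical
  let a : Fin (p + q) → ℝ := fun i => if (i : ℕ) < p then 1 else -1
  have ha : ∀ i, a i ≠ 0 := by intro i; simp only [a]; split_ifs <;> norm_num
  have hs : sMat p q = Matrix.diagonal (fun i => (a i : ℂ)) := by
    unfold sMat
    congr 1; funext i; simp only [a]; split_ifs <;> simp
  have hss : sMat p q * sMat p q = 1 := by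
    rw [hs, Matrix.diagonal_mul_diagonal, ← Matrix.diagonal_one]
    congr 1; funext i; simp only [a]; split_ifs <;> simp
  have hsH : (sMat p q).IsHermitian := by
    rw [hs]
    refine Matrix.isHermitian_diagonal_of_self_adjoint _ ?_
    funext i; simp
  generalize sMat p q = S at *
  have hSu : IsUnit S := IsUnit.of_mul_eq_one _ hss
  obtain ⟨C, l, hCu, hCP, hCS⟩ := simul_diag _ S hh hsH
  have hM : (h * C)ᴴ * S * (h * C) = Matrix.diagonal (fun i => ((l i - 1 : ℝ) : ℂ)) := by
    have e : (h * C)ᴴ * S * (h * C) = Cᴴ * S * C - Cᴴ * (S - hᴴ * S * h) * C := by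
      rw [Matrix.conjTranspose_mul]
      simp only [Matrix.mul_assoc, Matrix.mul_sub, Matrix.sub_mul]
      abel
    rw [e, hCS, hCP, ← Matrix.diagonal_one, Matrix.diagonal_sub]
    congr 1; funext i; simp
  have hl : ∀ i, l i ≠ 0 := diag_ne _ l
    ((((Matrix.isUnit_conjTranspose C).2 hCu).mul hSu).mul hCu) hCS
  have hm : ∀ i, l i - 1 ≠ 0 := diag_ne _ (fun i => l i - 1)
    ((((Matrix.isUnit_conjTranspose _).2 (hinv.mul hCu)).mul hSu).mul (hinv.mul hCu)) hM
  have c1 := inertia_eq C a l ha hl (by rw [← hs]; exact hCS)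
  have c2 := inertia_eq (h * C) a (fun i => l i - 1) ha hm (by rw [← hs]; exact hM)
  have hsub : ∀ i, 0 < l i → 0 < l i - 1 := by
    have hss : (Finset.univ.filter fun i => 0 < l i - 1) ⊆ (Finset.univ.filter fun i => 0 < l i) := by
      intro i hi
      simp only [Finset.mem_filter, Finset.mem_univ, true_and] at hi ⊢
      linarith
    have := Finset.eq_of_subset_of_card_le hss (by
      rw [← Fintype.card_subtype, ← Fintype.card_subtype, c1, c2])
    intro i hi
    have h1 : i ∈ (Finset.univ.filter fun i => 0 < l i) := by simpa using hi
    rw [← this] at h1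
    simpa using h1
  let e0 : {i // 0 < a i} ≃ {i // 0 < l i} := Fintype.equivOfCardEq c1.symm
  let σ : Fin (p + q) ≃ Fin (p + q) := e0.extendSubtype
  have hσ1 : ∀ i, 0 < a i → 0 < l (σ i) := fun i hi => e0.extendSubtype_mem i hi
  have hσ2 : ∀ i, ¬ 0 < a i → ¬ 0 < l (σ i) := fun i hi => e0.extendSubtype_not_mem i hi
  let D := C.submatrix id σ
  have hDS : Dᴴ * S * D = Matrix.diagonal (fun i => (l (σ i) : ℂ)) := perm_diag C S _ σ hCS
  have hDM : (h * D)ᴴ * S * (h * D) = Matrix.diagonal (fun i => ((l (σ i) - 1 : ℝ) : ℂ)) :=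
    perm_diag (h * C) S _ σ hM
  have hl' : ∀ i, (l (σ i) : ℂ) ≠ 0 := fun i => Complex.ofReal_ne_zero.2 (hl _)
  let d : Fin (p + q) → ℝ := fun i => (l (σ i) - 1) / l (σ i)
  let w : Fin (p + q) → ℝ := fun i => (Real.sqrt |l (σ i) - 1|)⁻¹
  have hwS : ∀ i, w i * (l (σ i) - 1) * w i = a i := by
    intro i
    have h0 : 0 < |l (σ i) - 1| := abs_pos.2 (hm _)
    have h1 : w i * w i = |l (σ i) - 1|⁻¹ := by
      simp only [w]; rw [← mul_inv, Real.mul_self_sqrt h0.le]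
    have h2 : w i * (l (σ i) - 1) * w i = (l (σ i) - 1) * |l (σ i) - 1|⁻¹ := by rw [← h1]; ring
    rw [h2]
    by_cases hi : (i : ℕ) < p
    · have hai : a i = 1 := by simp [a, hi]
      have := hsub _ (hσ1 i (by rw [hai]; norm_num))
      rw [abs_of_pos this, hai, mul_inv_cancel₀ this.ne']
    · have hai : a i = -1 := by simp [a, hi]
      have h3 := hσ2 i (by rw [hai]; norm_num)
      have : l (σ i) - 1 < 0 := by linarith
      rw [abs_of_neg this, hai, inv_neg, mul_neg, mul_inv_cancel₀ this.ne]
  let W : Matrix (Fin (p + q)) (Fin (p + q)) ℂ := Matrix.diagonal (fun i => (w i : ℂ))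
  have hWH : Wᴴ = W := by
    simp only [W]; rw [Matrix.diagonal_conjTranspose]; congr 1; funext i; simp
  have hg : (h * D * W)ᴴ * S * (h * D * W) = S := by
    calc (h * D * W)ᴴ * S * (h * D * W) = W * ((h * D)ᴴ * S * (h * D)) * W := by
          rw [Matrix.conjTranspose_mul _ W, hWH]; simp only [Matrix.mul_assoc]
      _ = S := by
          rw [hDM, hs]; simp only [W]
          rw [Matrix.diagonal_mul_diagonal, Matrix.diagonal_mul_diagonal]
          congr 1; funext i; rw [← hwS i]; push_cast; rfl
  have hgu : IsUnit (h * D * W) := by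
    refine IsUnit.of_mul_eq_one_right (S * ((h * D * W)ᴴ * S)) ?_
    rw [Matrix.mul_assoc, hg, hss]
  have hDu : IsUnit (Dᴴ * S) := by
    refine IsUnit.of_mul_eq_one (D * Matrix.diagonal (fun i => (l (σ i) : ℂ)⁻¹)) ?_
    rw [← Matrix.mul_assoc, hDS, Matrix.diagonal_mul_diagonal, ← Matrix.diagonal_one]
    congr 1; funext i; exact mul_inv_cancel₀ (hl' i)
  let E : Matrix (Fin (p + q)) (Fin (p + q)) ℂ := Matrix.diagonal (fun k => (d k : ℂ))
  have hkey : S * hᴴ * S * h * D = D * E := by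
    refine hDu.mul_left_cancel ?_
    calc Dᴴ * S * (S * hᴴ * S * h * D) = Dᴴ * (S * S) * (hᴴ * S * h * D) := by
          simp only [Matrix.mul_assoc]
      _ = (h * D)ᴴ * S * (h * D) := by
          rw [hss, Matrix.conjTranspose_mul]; simp only [Matrix.mul_assoc, Matrix.one_mul]
      _ = (Dᴴ * S * D) * E := by
          rw [hDM, hDS]; simp only [E]
          rw [Matrix.diagonal_mul_diagonal]
          congr 1; funext i; simp only [d]; push_cast; rw [mul_div_cancel₀ _ (hl' i)]
      _ = _ := by simp only [Matrix.mul_assoc]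
  have hEW : E * W = W * E := by
    simp only [E, W]; rw [Matrix.diagonal_mul_diagonal, Matrix.diagonal_mul_diagonal]
    congr 1; funext i; exact mul_comm _ _
  refine ⟨h * D * W, hg, d, fun k => ⟨?_, ?_⟩, ?_⟩
  · simp only [d]
    rcases lt_or_gt_of_ne (hl (σ k)) with h1 | h1
    · exact div_pos_of_neg_of_neg (by linarith) h1
    · exact div_pos (hsub _ h1) h1
  · simp only [d]
    intro h1
    rw [div_eq_one_iff_eq (hl _)] at h1
    linarith
  · have h1 : (h * S * hᴴ * S) * (h * D * W) = (h * D * W) * E := by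
      calc (h * S * hᴴ * S) * (h * D * W) = h * (S * hᴴ * S * h * D) * W := by
            simp only [Matrix.mul_assoc]
        _ = h * D * (E * W) := by rw [hkey]; simp only [Matrix.mul_assoc]
        _ = _ := by rw [hEW]; simp only [Matrix.mul_assoc]
    rw [Matrix.mul_assoc, h1, ← Matrix.mul_assoc,
      Matrix.nonsing_inv_mul _ ((Matrix.isUnit_iff_isUnit_det _).1 hgu), Matrix.one_mul]
end

section
/- Let h be an n×n complex matrix with s − h†sh positive definite, set m = h s h† s, and suppose v ∈ ℂⁿ is nonzero with m v = λ v for some λ ∈ ℂ. Then λ is real, λ ≠ 1, and v† s v ≠ 0; moreover, if v† s v > 0 then λ < 1, and if v† s v < 0 then λ > 1. -/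
open Matrix
open scoped ComplexOrder

lemma sMat_herm (p q : ℕ) : (sMat p q)ᴴ = sMat p q := by
  unfold sMat
  rw [Matrix.diagonal_conjTranspose]
  congr 1
  funext i
  simp only [Pi.star_apply]
  split_ifs <;> simp

lemma sMat_form (p q : ℕ) (z : Fin (p + q) → ℂ) :
    star z ⬝ᵥ (sMat p q *ᵥ z) =
      ((∑ i : Fin (p + q), (if (i : ℕ) < p then (1 : ℝ) else -1) * Complex.normSq (z i) : ℝ) : ℂ) := by
  unfold sMat
  simp only [dotProduct, Matrix.mulVec_diagonal, Complex.ofReal_sum]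
  refine Finset.sum_congr rfl fun i _ => ?_
  have h1 : star (z i) * z i = (Complex.normSq (z i) : ℂ) := by
    rw [Complex.normSq_eq_conj_mul_self]; rfl
  simp only [Pi.star_apply]
  split_ifs <;> push_cast <;> rw [← h1] <;> ring

lemma sMat_pos (p q : ℕ) (z : Fin (p + q) → ℂ) (hz : ∀ i : Fin (p + q), ¬ (i : ℕ) < p → z i = 0) :
    0 ≤ (star z ⬝ᵥ (sMat p q *ᵥ z)).re ∧ ((star z ⬝ᵥ (sMat p q *ᵥ z)).re = 0 → z = 0) := by
  have e : (star z ⬝ᵥ (sMat p q *ᵥ z)).re = ∑ i, Complex.normSq (z i) := by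
    rw [sMat_form, Complex.ofReal_re]
    refine Finset.sum_congr rfl fun i _ => ?_
    by_cases hi : (i : ℕ) < p
    · simp [hi]
    · simp [hi, hz i hi]
  rw [e]
  refine ⟨Finset.sum_nonneg fun i _ => Complex.normSq_nonneg _, fun h0 => ?_⟩
  rw [Finset.sum_eq_zero_iff_of_nonneg fun i _ => Complex.normSq_nonneg _] at h0
  funext i
  exact Complex.normSq_eq_zero.1 (h0 i (Finset.mem_univ i))

lemma sMat_neg (p q : ℕ) (z : Fin (p + q) → ℂ) (hz : ∀ i : Fin (p + q), (i : ℕ) < p → z i = 0) :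
    (star z ⬝ᵥ (sMat p q *ᵥ z)).re ≤ 0 ∧ ((star z ⬝ᵥ (sMat p q *ᵥ z)).re = 0 → z = 0) := by
  have e : (star z ⬝ᵥ (sMat p q *ᵥ z)).re = - ∑ i, Complex.normSq (z i) := by
    rw [sMat_form, Complex.ofReal_re, ← Finset.sum_neg_distrib]
    refine Finset.sum_congr rfl fun i _ => ?_
    by_cases hi : (i : ℕ) < p
    · simp [hz i hi]
    · simp [hi]
  rw [e]
  refine ⟨neg_nonpos.2 (Finset.sum_nonneg fun i _ => Complex.normSq_nonneg _), fun h0 => ?_⟩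
  rw [neg_eq_zero, Finset.sum_eq_zero_iff_of_nonneg fun i _ => Complex.normSq_nonneg _] at h0
  funext i
  exact Complex.normSq_eq_zero.1 (h0 i (Finset.mem_univ i))

lemma exists_kernel (p q : ℕ) (h : Matrix (Fin (p + q)) (Fin (p + q)) ℂ)
    (r : Fin (p + q) → ℂ) :
    ∃ (z : Fin (p + q) → ℂ) (c : ℂ), (z ≠ 0 ∨ c ≠ 0) ∧ (∀ i : Fin (p + q), (i : ℕ) < p → z i = 0) ∧
      (∀ i : Fin (p + q), ¬ (i : ℕ) < p → (h *ᵥ z + c • r) i = 0) := by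
  let f : ((Fin (p + q) → ℂ) × ℂ) →ₗ[ℂ] (Fin (p + q) → ℂ) :=
    { toFun := fun x i => if (i : ℕ) < p then x.1 i else (h *ᵥ x.1 + x.2 • r) i
      map_add' := by
        intro x y
        funext i
        by_cases hi : (i : ℕ) < p
        · simp [hi]
        · simp [hi, Matrix.mulVec_add]; ring
      map_smul' := by
        intro a x
        funext i
        by_cases hi : (i : ℕ) < p
        · simp [hi]
        · simp [hi, Matrix.mulVec_smul]; ring }
  have hk : LinearMap.ker f ≠ ⊥ := LinearMap.ker_ne_bot_of_finrank_lt (by simp)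
  obtain ⟨⟨z, c⟩, hm, hne⟩ := Submodule.exists_mem_ne_zero_of_ne_bot hk
  rw [LinearMap.mem_ker] at hm
  refine ⟨z, c, ?_, fun i hi => ?_, fun i hi => ?_⟩
  · by_contra! hc
    exact hne (by rw [hc.1, hc.2]; rfl)
  · have := congrFun hm i
    simpa [f, hi] using this
  · have := congrFun hm i
    simpa [f, hi] using this

/-- The sesquilinear identity. -/
lemma form_identity {n : Type*} [Fintype n] (s h : Matrix n n ℂ)
    (x v w : n → ℂ) (c : ℂ)
    (h1 : star (h *ᵥ x) ⬝ᵥ (s *ᵥ v) = star x ⬝ᵥ (s *ᵥ w))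
    (h2 : star v ⬝ᵥ (s *ᵥ (h *ᵥ x)) = star w ⬝ᵥ (s *ᵥ x)) :
    star (h *ᵥ x + c • v) ⬝ᵥ (s *ᵥ (h *ᵥ x + c • v)) +
      (star x ⬝ᵥ (s *ᵥ x) - star (h *ᵥ x) ⬝ᵥ (s *ᵥ (h *ᵥ x))) =
    star (x + c • w) ⬝ᵥ (s *ᵥ (x + c • w)) +
      (star c * c) * (star v ⬝ᵥ (s *ᵥ v) - star w ⬝ᵥ (s *ᵥ w)) := by
  simp only [star_add, star_smul, Matrix.mulVec_add, Matrix.mulVec_smul, add_dotProduct,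
    dotProduct_add, smul_dotProduct, dotProduct_smul, smul_eq_mul, h1, h2]
  ring

lemma posDef_form {p q : ℕ} {h : Matrix (Fin (p + q)) (Fin (p + q)) ℂ}
    (hh : (sMat p q - hᴴ * sMat p q * h).PosDef) (x : Fin (p + q) → ℂ) (hx : x ≠ 0) :
    0 < (star x ⬝ᵥ (sMat p q *ᵥ x) - star (h *ᵥ x) ⬝ᵥ (sMat p q *ᵥ (h *ᵥ x))).re := by
  have := hh.dotProduct_mulVec_pos hx
  have e : star x ⬝ᵥ ((sMat p q - hᴴ * sMat p q * h) *ᵥ x) =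
      star x ⬝ᵥ (sMat p q *ᵥ x) - star (h *ᵥ x) ⬝ᵥ (sMat p q *ᵥ (h *ᵥ x)) := by
    rw [Matrix.sub_mulVec, dotProduct_sub, Matrix.star_mulVec, ← Matrix.dotProduct_mulVec,
      Matrix.mulVec_mulVec, Matrix.mulVec_mulVec, Matrix.mul_assoc]
  rw [e] at this
  exact (Complex.lt_def.1 this).1

lemma sMat_sq (p q : ℕ) : sMat p q * sMat p q = 1 := by
  unfold sMat
  rw [Matrix.diagonal_mul_diagonal, ← Matrix.diagonal_one]
  congr 1
  funext i
  split_ifs <;> simp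

lemma dual_pos {p q : ℕ} {h : Matrix (Fin (p + q)) (Fin (p + q)) ℂ}
    (hh : (sMat p q - hᴴ * sMat p q * h).PosDef) (v w : Fin (p + q) → ℂ) (hv : v ≠ 0)
    (hw : w = sMat p q *ᵥ (hᴴ *ᵥ (sMat p q *ᵥ v))) :
    0 < (star v ⬝ᵥ (sMat p q *ᵥ v) - star w ⬝ᵥ (sMat p q *ᵥ w)).re := by
  have hsw : sMat p q *ᵥ w = hᴴ *ᵥ (sMat p q *ᵥ v) := by
    rw [hw, Matrix.mulVec_mulVec, sMat_sq, Matrix.one_mulVec]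
  have h1 : ∀ x, star (h *ᵥ x) ⬝ᵥ (sMat p q *ᵥ v) = star x ⬝ᵥ (sMat p q *ᵥ w) := by
    intro x
    rw [hsw, Matrix.star_mulVec, ← Matrix.dotProduct_mulVec]
  have hs : ∀ a b, star (star a ⬝ᵥ (sMat p q *ᵥ b)) = star b ⬝ᵥ (sMat p q *ᵥ a) := by
    intro a b
    rw [Matrix.star_dotProduct, star_star, Matrix.star_mulVec, sMat_herm,
      ← Matrix.dotProduct_mulVec]
  have h2 : ∀ x, star v ⬝ᵥ (sMat p q *ᵥ (h *ᵥ x)) = star w ⬝ᵥ (sMat p q *ᵥ x) := by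
    intro x
    rw [← hs, h1, hs]
  by_contra! hneg
  obtain ⟨z, c, hne, hz, hu⟩ := exists_kernel p q h (v - h *ᵥ w)
  obtain ⟨x, hx⟩ : ∃ x, x = z - c • w := ⟨_, rfl⟩
  have hzx : x + c • w = z := by rw [hx]; simp
  have hux : h *ᵥ z + c • (v - h *ᵥ w) = h *ᵥ x + c • v := by
    rw [← hzx, Matrix.mulVec_add, Matrix.mulVec_smul, smul_sub]; abel
  rw [hux] at hu
  have key := congrArg Complex.re (form_identity (sMat p q) h x v w c (h1 x) (h2 x))
  have hcc : star c * c = ((Complex.normSq c : ℝ) : ℂ) := by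
    rw [Complex.normSq_eq_conj_mul_self]; rfl
  rw [hzx, hcc, Complex.add_re, Complex.add_re, Complex.re_ofReal_mul] at key
  obtain ⟨up, u0⟩ := sMat_pos p q _ hu
  obtain ⟨zn, z0⟩ := sMat_neg p q z hz
  have hcn := mul_nonpos_of_nonneg_of_nonpos (Complex.normSq_nonneg c) hneg
  by_cases hx0 : x = 0
  · have e0 : (star x ⬝ᵥ (sMat p q *ᵥ x) -
        star (h *ᵥ x) ⬝ᵥ (sMat p q *ᵥ (h *ᵥ x))).re = 0 := by simp [hx0]
    have hz0 : z = 0 := z0 (by linarith)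
    have hu0 := u0 (by linarith)
    rw [hx0, Matrix.mulVec_zero, zero_add, smul_eq_zero] at hu0
    rcases hu0 with hc | hc
    · exact hne.elim (fun t => t hz0) (fun t => t hc)
    · exact hv hc
  · have := posDef_form hh x hx0
    linarith

/-- Eigenvalue analysis from the proof of Lemma 4.13: any eigenvalue `λ` of
`m = h s h† s` (for `h ∈ H_{p,q}`) is real, `λ ≠ 1`, the eigenvector `v`
satisfies `v†sv ≠ 0`, and the sign of `v†sv` controls whether `λ < 1` or
`λ > 1`. -/
theorem M0_eigenvalue_real (p q : ℕ) (hp : 1 ≤ p) (hq : 1 ≤ q)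
    (h : Matrix (Fin (p + q)) (Fin (p + q)) ℂ)
    (hh : (sMat p q - hᴴ * sMat p q * h).PosDef)
    (v : Fin (p + q) → ℂ) (hv : v ≠ 0) (lam : ℂ)
    (heig : (h * sMat p q * hᴴ * sMat p q) *ᵥ v = lam • v) :
    lam.im = 0 ∧ lam ≠ 1 ∧ (star v ⬝ᵥ (sMat p q *ᵥ v)) ≠ 0 ∧
      (0 < (star v ⬝ᵥ (sMat p q *ᵥ v)).re → lam.re < 1) ∧
      ((star v ⬝ᵥ (sMat p q *ᵥ v)).re < 0 → 1 < lam.re) := by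
  obtain ⟨w, hw⟩ : ∃ w, w = sMat p q *ᵥ (hᴴ *ᵥ (sMat p q *ᵥ v)) := ⟨_, rfl⟩
  have hd := dual_pos hh v w hv hw
  have hhw : h *ᵥ w = lam • v := by
    rw [← heig, hw]
    simp only [Matrix.mulVec_mulVec, Matrix.mul_assoc]
  have hww : star w ⬝ᵥ (sMat p q *ᵥ w) = lam * (star v ⬝ᵥ (sMat p q *ᵥ v)) := by
    have e : star w = star v ᵥ* (sMat p q * h * sMat p q) := by
      rw [hw]
      simp only [Matrix.mulVec_mulVec, Matrix.star_mulVec, Matrix.conjTranspose_mul,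
        Matrix.conjTranspose_conjTranspose, sMat_herm, Matrix.mul_assoc]
    rw [e, ← Matrix.dotProduct_mulVec, Matrix.mulVec_mulVec, Matrix.mul_assoc, sMat_sq,
      Matrix.mul_one, ← Matrix.mulVec_mulVec, hhw, Matrix.mulVec_smul, dotProduct_smul,
      smul_eq_mul]
  have hwr := congrArg Complex.im hww
  rw [hww] at hd
  rw [sMat_form p q w] at hwr
  rw [sMat_form p q v] at hd hwr ⊢
  generalize (∑ i : Fin (p + q), (if (i : ℕ) < p then (1 : ℝ) else -1) * Complex.normSq (v i)) = a at *
  simp only [Complex.sub_re, Complex.re_mul_ofReal, Complex.im_mul_ofReal,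
    Complex.ofReal_re, Complex.ofReal_im] at hd hwr ⊢
  have ha : a ≠ 0 := by
    rintro rfl
    simp at hd
  refine ⟨?_, ?_, ?_, ?_, ?_⟩
  · rcases mul_eq_zero.1 hwr.symm with h0 | h0
    · exact h0
    · exact absurd h0 ha
  · rintro rfl
    simp at hd
  · exact_mod_cast ha
  · intro h0
    nlinarith
  · intro h0
    nlinarith
end

section
/- For all X, Y ∈ ζ_s^+ the matrix X + Y is invertible, and for every u ∈ ℂⁿ the twisted convolution integral ∫_{ℂⁿ} γ_X(u − v) · γ_Y(v) · e^{−i·Im⟨u, sv⟩} dvol(v) converges absolutely and equals γ_{X∘Y}(u), where X ∘ Y = (Y + s)(X + Y)^{-1}(X + s) − s. -/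
open Matrix MeasureTheory
open scoped ComplexOrder

/-- The Gaussian function `γ_X(v) = det(X + s) exp(−½⟨v, Xv⟩)` associated to
`X ∈ ζ_s⁺`. -/
noncomputable def gaussianFn (p q : ℕ) (X : Matrix (Fin (p + q)) (Fin (p + q)) ℂ)
    (v : Fin (p + q) → ℂ) : ℂ :=
  (X + sMat p q).det * Complex.exp (-(1 / 2 : ℂ) * (star v ⬝ᵥ (X *ᵥ v)))

/-- The normalized Lebesgue measure `dvol = (2π)^{-n} · Leb` on `ℂⁿ`, for which
`∫ exp(−⟨v,v⟩/2) dvol(v) = 1`. -/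
noncomputable def dvol (n : ℕ) : Measure (Fin n → ℂ) :=
  (ENNReal.ofReal ((2 * Real.pi) ^ n))⁻¹ • (volume : Measure (Fin n → ℂ))

lemma diag_aux {n : ℕ} (A : Matrix (Fin n) (Fin n) ℂ) (hA : (A + Aᴴ).PosDef) :
    ∃ (P : Matrix (Fin n) (Fin n) ℂ) (d : Fin n → ℂ), P.det ≠ 0 ∧ (∀ i, 0 < (d i).re) ∧
      Pᴴ * A * P = diagonal d := by
  obtain ⟨B, hB⟩ : ∃ B : Matrix (Fin n) (Fin n) ℂ, A + Aᴴ = Bᴴ * B := by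
    open scoped MatrixOrder in
    exact CStarAlgebra.nonneg_iff_eq_star_mul_self.mp hA.posSemidef.nonneg
  have hBdet : IsUnit B.det := by
    have := hA.det_pos.ne'
    rw [hB, det_mul] at this
    exact isUnit_iff_ne_zero.mpr (right_ne_zero_of_mul this)
  set Q := B⁻¹ with hQ
  have hBQ : B * Q = 1 := mul_nonsing_inv B hBdet
  have hBQ' : Qᴴ * Bᴴ = 1 := by rw [← conjTranspose_mul, hBQ, conjTranspose_one]
  have hQdet : Q.det ≠ 0 := by
    intro h
    have := congrArg det hBQ
    rw [det_mul, h] at this; simp at this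
  set M := Qᴴ * A * Q with hM
  have hMM : M + Mᴴ = 1 := by
    have : M + Mᴴ = Qᴴ * (A + Aᴴ) * Q := by
      rw [hM]; simp only [conjTranspose_mul, conjTranspose_conjTranspose]; noncomm_ring
    rw [this, hB]
    calc Qᴴ * (Bᴴ * B) * Q = (Qᴴ * Bᴴ) * (B * Q) := by noncomm_ring
      _ = 1 := by rw [hBQ, hBQ', one_mul]
  set L := (-Complex.I) • (M - (1/2 : ℂ) • 1) with hL
  have hMh : Mᴴ = 1 - M := by rw [← hMM]; abel
  have hLh : L.IsHermitian := by
    rw [IsHermitian, hL, conjTranspose_smul, conjTranspose_sub, hMh, conjTranspose_smul, conjTranspose_one]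
    ext i j
    simp
    ring
  have hML : M = (1/2 : ℂ) • 1 + Complex.I • L := by
    rw [hL, smul_smul]; simp
  have hsp := hLh.conjStarAlgAut_star_eigenvectorUnitary
  rw [Unitary.conjStarAlgAut_star_apply] at hsp
  set U : Matrix (Fin n) (Fin n) ℂ := (hLh.eigenvectorUnitary : Matrix (Fin n) (Fin n) ℂ) with hU
  have hUU : Uᴴ * U = 1 := Unitary.coe_star_mul_self hLh.eigenvectorUnitary
  have hsp' : Uᴴ * L * U = diagonal (fun i => (hLh.eigenvalues i : ℂ)) := hsp
  refine ⟨Q * U, fun i => 1/2 + Complex.I * hLh.eigenvalues i, ?_, ?_, ?_⟩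
  · rw [det_mul]
    refine mul_ne_zero hQdet ?_
    intro h
    have := congrArg det hUU
    rw [det_mul, h] at this; simp at this
  · intro i
    simp
  · have : (Q * U)ᴴ * A * (Q * U) = Uᴴ * M * U := by
      rw [hM, conjTranspose_mul]; noncomm_ring
    rw [this, hML, mul_add, add_mul, Matrix.mul_smul, Matrix.smul_mul, Matrix.mul_smul, Matrix.smul_mul, hsp', mul_one, hUU]
    ext i j
    by_cases h : i = j
    · subst h; simp
    · simp [h]

lemma one_dim (d α β : ℂ) (hd : 0 < d.re) :
    Integrable (fun w : ℂ => Complex.exp (-(1/2) * (d * (star w * w)) + (1/2) * (α * w) + (1/2) * (star w * β))) ∧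
    ∫ w : ℂ, Complex.exp (-(1/2) * (d * (star w * w)) + (1/2) * (α * w) + (1/2) * (star w * β))
      = 2 * Real.pi / d * Complex.exp ((1/2) * (α * β / d)) := by
  have hd0 : d ≠ 0 := by rintro rfl; simp at hd
  have hre : (-(d/2)).re < 0 := by
    have : (-(d/2)).re = -(d.re/2) := by simp
    rw [this]; linarith
  have hre' : 0 < (d/2).re := by
    have : ((d/2)).re = (d.re/2) := by simp
    rw [this]; linarith
  have mp := Complex.volume_preserving_equiv_real_prod.symm
  have key : ∀ z : ℝ × ℝ, Complex.exp (-(1/2) * (d * (star (Complex.measurableEquivRealProd.symm z) * (Complex.measurableEquivRealProd.symm z))) + (1/2) * (α * (Complex.measurableEquivRealProd.symm z)) + (1/2) * (star (Complex.measurableEquivRealProd.symm z) * β))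
     = Complex.exp (-(d/2) * z.1^2 + ((α+β)/2) * z.1 + 0) * Complex.exp (-(d/2) * z.2^2 + (Complex.I * (α-β)/2) * z.2 + 0) := by
    rintro ⟨x, y⟩
    have hz : Complex.measurableEquivRealProd.symm (x, y) = x + y * Complex.I := by
      apply Complex.ext <;> simp [Complex.measurableEquivRealProd]
    have hs : star ((x:ℂ) + y * Complex.I) = x - y * Complex.I := by
      simp; ring
    rw [hz, hs, ← Complex.exp_add]
    congr 1
    linear_combination (1/2*d*y^2) * Complex.I_sq
  constructor
  · rw [← mp.integrable_comp_emb (MeasurableEquiv.measurableEmbedding _)]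
    simp only [Function.comp_def, key]
    exact Integrable.mul_prod (integrable_cexp_quadratic hre' _ _) (integrable_cexp_quadratic hre' _ _)
  · rw [← mp.integral_comp (MeasurableEquiv.measurableEmbedding _)]
    simp only [key]
    rw [Measure.volume_eq_prod, integral_prod_mul (fun x : ℝ => Complex.exp (-(d/2) * x^2 + ((α+β)/2) * x + 0)) (fun x : ℝ => Complex.exp (-(d/2) * x^2 + (Complex.I * (α-β)/2) * x + 0)),
      integral_cexp_quadratic hre, integral_cexp_quadratic hre]
    have hne : (Real.pi : ℂ) / - -(d/2) ≠ 0 := by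
      simp [Real.pi_ne_zero, hd0]
    have e1 : ((Real.pi : ℂ) / - -(d/2)) ^ (1/2 : ℂ) * ((Real.pi : ℂ) / - -(d/2)) ^ (1/2 : ℂ) = 2 * Real.pi / d := by
      rw [← Complex.cpow_add _ _ hne]; norm_num; field_simp
    rw [mul_mul_mul_comm, e1, ← Complex.exp_add]
    congr 2
    field_simp
    linear_combination ((α-β)^2) * Complex.I_sq

lemma map_vol {n : ℕ} (P : Matrix (Fin n) (Fin n) ℂ) (hP : P.det ≠ 0) :
    Measure.map (fun w => P *ᵥ w) (volume : Measure (Fin n → ℂ)) =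
      ENNReal.ofReal (Complex.normSq P.det)⁻¹ • volume := by
  have hdet : LinearMap.det ((Matrix.toLin' P).restrictScalars ℝ) = Complex.normSq P.det := by
    rw [LinearMap.det_restrictScalars, LinearMap.det_toLin', Algebra.norm_complex_apply]
  have h := Measure.map_linearMap_addHaar_eq_smul_addHaar (volume : Measure (Fin n → ℂ)) (f := (Matrix.toLin' P).restrictScalars ℝ) (by rw [hdet]; simpa using hP)
  rw [hdet, abs_of_nonneg (inv_nonneg.mpr (Complex.normSq_nonneg _))] at h
  exact h

lemma gauss_int {n : ℕ} (A : Matrix (Fin n) (Fin n) ℂ) (hA : (A + Aᴴ).PosDef) (a b : Fin n → ℂ) :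
    A.det ≠ 0 ∧ Integrable (fun v : Fin n → ℂ => Complex.exp (-(1/2) * (star v ⬝ᵥ (A *ᵥ v))
        + (1/2) * (a ⬝ᵥ v) + (1/2) * (star v ⬝ᵥ b))) ∧
    ∫ v : Fin n → ℂ, Complex.exp (-(1/2) * (star v ⬝ᵥ (A *ᵥ v))
        + (1/2) * (a ⬝ᵥ v) + (1/2) * (star v ⬝ᵥ b)) =
      (2 * Real.pi) ^ n / A.det * Complex.exp ((1/2) * (a ⬝ᵥ (A⁻¹ *ᵥ b))) := by
  obtain ⟨P, d, hP, hd, hPd⟩ := diag_aux A hA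
  have hd0 : ∀ i, d i ≠ 0 := fun i h => by have := hd i; simp [h] at this
  have hdet : star P.det * A.det * P.det = ∏ i, d i := by
    rw [← det_conjTranspose, ← det_mul, ← det_mul, hPd, det_diagonal]
  have hprod : ∏ i, d i ≠ 0 := Finset.prod_ne_zero_iff.mpr fun i _ => hd0 i
  have hAdet : A.det ≠ 0 := by
    intro h; rw [h] at hdet; apply hprod; rw [← hdet]; ring
  have hPu : IsUnit P.det := isUnit_iff_ne_zero.mpr hP
  have hPhu : IsUnit Pᴴ.det := by rw [det_conjTranspose]; exact hPu.star
  have hAinv : A⁻¹ = P * diagonal (fun i => (d i)⁻¹) * Pᴴ := by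
    apply inv_eq_right_inv
    have h1 : Pᴴ * (A * (P * diagonal (fun i => (d i)⁻¹) * Pᴴ)) = Pᴴ * 1 := by
      calc _ = (Pᴴ * A * P) * diagonal (fun i => (d i)⁻¹) * Pᴴ := by noncomm_ring
        _ = Pᴴ * 1 := by
          rw [hPd, diagonal_mul_diagonal]
          simp [hd0]
    have := congrArg (fun Z => (Pᴴ)⁻¹ * Z) h1
    simpa [← mul_assoc, nonsing_inv_mul _ hPhu] using this
  set α := a ᵥ* P with hα
  set β := Pᴴ *ᵥ b with hβ
  set F := (fun v : Fin n → ℂ => Complex.exp (-(1/2) * (star v ⬝ᵥ (A *ᵥ v))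
        + (1/2) * (a ⬝ᵥ v) + (1/2) * (star v ⬝ᵥ b))) with hF
  have hFP : ∀ w, F (P *ᵥ w) = ∏ i, Complex.exp (-(1/2) * (d i * (star (w i) * w i)) + (1/2) * (α i * w i) + (1/2) * (star (w i) * β i)) := by
    intro w
    rw [← Complex.exp_sum, hF]
    simp only
    congr 1
    rw [Finset.sum_add_distrib, Finset.sum_add_distrib, ← Finset.mul_sum, ← Finset.mul_sum, ← Finset.mul_sum]
    congr 1
    · congr 1
      · congr 1
        rw [star_mulVec, ← dotProduct_mulVec, mulVec_mulVec, mulVec_mulVec, hPd]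
        simp only [dotProduct, mulVec_diagonal, Pi.star_apply]
        exact Finset.sum_congr rfl fun i _ => by ring
      · rw [dotProduct_mulVec]; rfl
    · rw [star_mulVec, ← dotProduct_mulVec]; rfl
  have hcont : Continuous F := by
    rw [hF]
    refine Complex.continuous_exp.comp ?_
    simp only [dotProduct, mulVec, Pi.star_apply]
    fun_prop
  have hPmeas : Measurable (fun w : Fin n → ℂ => P *ᵥ w) := by
    apply Continuous.measurable
    fun_prop
  have hn : Complex.normSq P.det ≠ 0 := by simpa using hP
  have hn0 : 0 < Complex.normSq P.det := Complex.normSq_pos.mpr hP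
  have hmap := map_vol P hP
  have hint : Integrable (fun w => F (P *ᵥ w)) := by
    simp only [hFP]
    exact Integrable.fintype_prod (f := fun i (w : ℂ) => Complex.exp (-(1/2) * (d i * (star w * w)) + (1/2) * (α i * w) + (1/2) * (star w * β i))) fun i => (one_dim (d i) (α i) (β i) (hd i)).1
  refine ⟨hAdet, ?_, ?_⟩
  · have h2 : Integrable F (Measure.map (fun w => P *ᵥ w) (volume : Measure (Fin n → ℂ))) :=
      (integrable_map_measure hcont.aestronglyMeasurable hPmeas.aemeasurable).mpr hint
    rw [hmap, integrable_smul_measure] at h2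
    · exact h2
    · simpa using hP
    · exact ENNReal.ofReal_ne_top
  · have h3 := integral_map (μ := (volume : Measure (Fin n → ℂ))) hPmeas.aemeasurable (f := F) hcont.aestronglyMeasurable
    rw [hmap, integral_smul_measure, ENNReal.toReal_ofReal (inv_nonneg.mpr hn0.le)] at h3
    simp only [hFP] at h3
    rw [integral_fintype_prod_volume_eq_prod (fun i (w : ℂ) => Complex.exp (-(1/2) * (d i * (star w * w)) + (1/2) * (α i * w) + (1/2) * (star w * β i)))] at h3
    simp only [fun i => (one_dim (d i) (α i) (β i) (hd i)).2] at h3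
    rw [Finset.prod_mul_distrib, ← Complex.exp_sum, ← Finset.mul_sum, Finset.prod_div_distrib, ← hdet] at h3
    have h4 : a ⬝ᵥ (A⁻¹ *ᵥ b) = ∑ i, α i * β i / d i := by
      rw [hAinv, ← mulVec_mulVec, ← mulVec_mulVec, dotProduct_mulVec]
      simp only [dotProduct, mulVec_diagonal, ← hα, ← hβ]
      exact Finset.sum_congr rfl fun i _ => by ring
    rw [h4]
    have hns : (Complex.normSq P.det : ℂ) = star P.det * P.det := by
      rw [Complex.normSq_eq_conj_mul_self]; rfl
    have hsP : star P.det ≠ 0 := star_ne_zero.mpr hP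
    rw [Complex.real_smul, Complex.ofReal_inv, hns] at h3
    simp only [Finset.prod_const, Finset.card_univ, Fintype.card_fin] at h3
    rw [inv_mul_eq_iff_eq_mul₀ (mul_ne_zero hsP hP)] at h3
    rw [h3]
    field_simp

/-- **Twisted convolution of Gaussians** (proof of Lemma 5.6): for `X, Y ∈ ζ_s⁺`
the matrix `X + Y` is invertible, the twisted convolution integral converges
absolutely, and `γ_X ♯ γ_Y = γ_{X∘Y}` with
`X ∘ Y = (Y+s)(X+Y)⁻¹(X+s) − s`. -/
theorem gaussian_twisted_convolution (p q : ℕ) (hp : 1 ≤ p) (hq : 1 ≤ q)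
    (X Y : Matrix (Fin (p + q)) (Fin (p + q)) ℂ)
    (hX : (X + Xᴴ).PosDef) (hXdet : (X + sMat p q).det ≠ 0)
    (hY : (Y + Yᴴ).PosDef) (hYdet : (Y + sMat p q).det ≠ 0)
    (u : Fin (p + q) → ℂ) :
    IsUnit (X + Y) ∧
    Integrable (fun v : Fin (p + q) → ℂ =>
      gaussianFn p q X (u - v) * gaussianFn p q Y v *
        Complex.exp (-Complex.I * ((star u ⬝ᵥ (sMat p q *ᵥ v)).im : ℂ)))
      (dvol (p + q)) ∧
    (∫ v : Fin (p + q) → ℂ,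
        gaussianFn p q X (u - v) * gaussianFn p q Y v *
          Complex.exp (-Complex.I * ((star u ⬝ᵥ (sMat p q *ᵥ v)).im : ℂ))
        ∂(dvol (p + q)))
      = gaussianFn p q
          ((Y + sMat p q) * (X + Y)⁻¹ * (X + sMat p q) - sMat p q) u := by
  set s := sMat p q with hs
  have hsH : sᴴ = s := by
    rw [hs, sMat, diagonal_conjTranspose]
    congr 1
    ext i
    simp only [Pi.star_apply]
    split_ifs <;> simp
  have hA : ((X + Y) + (X + Y)ᴴ).PosDef := by
    have h := hX.add hY
    have e : (X + Y) + (X + Y)ᴴ = X + Xᴴ + (Y + Yᴴ) := by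
      rw [conjTranspose_add]; abel
    rw [e]; exact h
  obtain ⟨hdet, hint, hval⟩ := gauss_int (X + Y) hA (star u ᵥ* (X - s)) ((X + s) *ᵥ u)
  have hu : IsUnit (X + Y).det := isUnit_iff_ne_zero.mpr hdet
  set C : ℂ := (X + s).det * (Y + s).det * Complex.exp (-(1/2) * (star u ⬝ᵥ (X *ᵥ u))) with hC
  have key : ∀ v : Fin (p + q) → ℂ, gaussianFn p q X (u - v) * gaussianFn p q Y v *
        Complex.exp (-Complex.I * ((star u ⬝ᵥ (s *ᵥ v)).im : ℂ)) =
      C * Complex.exp (-(1/2) * (star v ⬝ᵥ ((X + Y) *ᵥ v))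
        + (1/2) * ((star u ᵥ* (X - s)) ⬝ᵥ v) + (1/2) * (star v ⬝ᵥ ((X + s) *ᵥ u))) := by
    intro v
    have him : -Complex.I * ((star u ⬝ᵥ (s *ᵥ v)).im : ℂ) =
        -(1/2) * (star u ⬝ᵥ (s *ᵥ v) - star v ⬝ᵥ (s *ᵥ u)) := by
      have hst : star v ⬝ᵥ (s *ᵥ u) = (starRingEnd ℂ) (star u ⬝ᵥ (s *ᵥ v)) := by
        rw [starRingEnd_apply, ← star_dotProduct_star, star_star, star_mulVec, hsH,
          dotProduct_comm, ← dotProduct_mulVec, dotProduct_comm, dotProduct_comm]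
      rw [hst, Complex.sub_conj]
      push_cast
      ring
    rw [him, gaussianFn, gaussianFn, ← hs, hC]
    rw [show ∀ a b c d e : ℂ, a * b * (c * d) * e = a * c * (b * d * e) from
      fun a b c d e => by ring, mul_assoc (_ * _) (Complex.exp _), ← Complex.exp_add,
      ← Complex.exp_add, ← Complex.exp_add]
    congr 2
    rw [← dotProduct_mulVec]
    simp only [star_sub, mulVec_sub, sub_mulVec, add_mulVec, dotProduct_add, dotProduct_sub,
      sub_dotProduct]
    ring
  refine ⟨(isUnit_iff_isUnit_det _).mpr hu, ?_, ?_⟩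
  · simp only [key]
    refine Integrable.smul_measure (hint.const_mul C) ?_
    rw [Ne, ENNReal.inv_eq_top, ENNReal.ofReal_eq_zero, not_le]
    positivity
  · simp only [key]
    rw [dvol, integral_smul_measure, integral_const_mul, hval, ENNReal.toReal_inv,
      ENNReal.toReal_ofReal (by positivity), gaussianFn, ← hs, sub_add_cancel, det_mul, det_mul,
      det_nonsing_inv, Ring.inverse_eq_inv']
    have hmat : (Y + s) * (X + Y)⁻¹ * (X + s) - s = X - (X - s) * (X + Y)⁻¹ * (X + s) := by
      have : Y + s = (X + Y) - (X - s) := by abel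
      rw [this, sub_mul, sub_mul, mul_nonsing_inv _ hu]
      noncomm_ring
    rw [hmat, sub_mulVec, dotProduct_sub, ← mulVec_mulVec, ← mulVec_mulVec, mul_sub,
      show ∀ x z : ℂ, x - -(1/2 : ℂ) * z = x + 1/2 * z from fun x z => by ring,
      Complex.exp_add, ← dotProduct_mulVec, hC, Complex.real_smul]
    have hpi : (2 * (Real.pi : ℂ)) ^ (p + q) ≠ 0 :=
      pow_ne_zero _ (by simp [Real.pi_ne_zero])
    push_cast
    field_simp
end

section
/- Let n ≥ 1 and let ψ_1, …, ψ_n and φ_1, …, φ_n be real numbers with sin((ψ_j − φ_l)/2) ≠ 0 for all 1 ≤ j, l ≤ n. Let A be the n×n real matrix with entries A_{jl} = 1/sin((ψ_j − φ_l)/2). Then [∏_{1≤j<j'≤n} sin²((ψ_j − ψ_{j'})/2) · ∏_{1≤l<l'≤n} sin²((φ_l − φ_{l'})/2)] / [∏_{j=1}^{n} ∏_{l=1}^{n} sin²((ψ_j − φ_l)/2)] = (det A)². -/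
open Matrix

lemma csd_schur (n : ℕ) (A : Matrix (Fin (n+1)) (Fin (n+1)) ℝ) (h : A 0 0 ≠ 0) :
    A.det = A 0 0 * (Matrix.of fun i j : Fin n =>
      A i.succ j.succ - A i.succ 0 / A 0 0 * A 0 j.succ).det := by
  let c : Fin (n+1) → ℝ := Fin.cases 0 (fun i => A i.succ 0 / A 0 0)
  have h1 : A.det = (Matrix.of fun i j => A i j - c i * A 0 j).det := by
    apply Matrix.det_eq_of_forall_row_eq_smul_add_const c 0 rfl
    intro i j
    simp [c]
  rw [h1, Matrix.det_succ_column_zero, Fin.sum_univ_succ, Finset.sum_eq_zero]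
  · simp [c, Matrix.submatrix]
  · intro i _
    simp [c, h]

lemma csd_plucker (a b c d : ℝ) :
    Real.sin ((b - c) / 2) * Real.sin ((a - d) / 2)
      - Real.sin ((a - c) / 2) * Real.sin ((b - d) / 2)
    = - (Real.sin ((a - b) / 2) * Real.sin ((c - d) / 2)) := by
  simp only [sub_div, Real.sin_sub]
  ring

theorem csd_aux (n : ℕ) (ψ φ : Fin n → ℝ)
    (h : ∀ j l : Fin n, Real.sin ((ψ j - φ l) / 2) ≠ 0) :
    ((∏ j : Fin n, ∏ j' ∈ Finset.Ioi j, (Real.sin ((ψ j - ψ j') / 2)) ^ 2) *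
        (∏ l : Fin n, ∏ l' ∈ Finset.Ioi l, (Real.sin ((φ l - φ l') / 2)) ^ 2)) /
      (∏ j : Fin n, ∏ l : Fin n, (Real.sin ((ψ j - φ l) / 2)) ^ 2)
    = (Matrix.det (Matrix.of fun j l : Fin n => 1 / Real.sin ((ψ j - φ l) / 2))) ^ 2 := by
  induction n with
  | zero => simp
  | succ n ih =>
    have ih' := ih (fun i => ψ i.succ) (fun i => φ i.succ) (fun j l => h _ _)
    rw [csd_schur _ _ (by simpa using h 0 0)]
    have key : (Matrix.of fun i j : Fin n =>
        (Matrix.of fun j l : Fin (n+1) => 1 / Real.sin ((ψ j - φ l) / 2)) i.succ j.succ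
        - (Matrix.of fun j l : Fin (n+1) => 1 / Real.sin ((ψ j - φ l) / 2)) i.succ 0
        / (Matrix.of fun j l : Fin (n+1) => 1 / Real.sin ((ψ j - φ l) / 2)) 0 0
        * (Matrix.of fun j l : Fin (n+1) => 1 / Real.sin ((ψ j - φ l) / 2)) 0 j.succ)
      = Matrix.of fun i j => (- Real.sin ((ψ 0 - ψ i.succ) / 2) / Real.sin ((ψ i.succ - φ 0) / 2)) *
        (Matrix.of fun i j => (Real.sin ((φ 0 - φ j.succ) / 2) / Real.sin ((ψ 0 - φ j.succ) / 2)) *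
        (Matrix.of fun j l : Fin n => 1 / Real.sin ((ψ j.succ - φ l.succ) / 2)) i j) i j := by
      ext i j
      simp only [Matrix.of_apply]
      have a1 := h i.succ j.succ
      have a2 := h i.succ 0
      have a3 := h 0 j.succ
      have a4 := h 0 0
      have := csd_plucker (ψ 0) (ψ i.succ) (φ 0) (φ j.succ)
      field_simp
      linarith
    rw [key, Matrix.det_mul_column, Matrix.det_mul_row, mul_pow, mul_pow, mul_pow, ← ih']
    simp only [Fin.prod_univ_succ (n := n), Fin.prod_Ioi_zero, Fin.prod_Ioi_succ, Matrix.of_apply,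
      Finset.prod_mul_distrib, Finset.prod_div_distrib, div_pow, ← Finset.prod_pow, neg_sq, one_pow]
    simp only [div_eq_mul_inv, mul_inv]
    ring


/-- **Lemma 3.10 (Berezin / Cauchy determinant)**: for real `ψ_j`, `φ_l` with all
`sin((ψ_j − φ_l)/2) ≠ 0`,
`∏_{j<j'} sin²((ψ_j−ψ_{j'})/2) · ∏_{l<l'} sin²((φ_l−φ_{l'})/2) / ∏_{j,l} sin²((ψ_j−φ_l)/2)`
equals `det(A)²`, where `A_{jl} = 1/sin((ψ_j − φ_l)/2)`. -/
theorem cauchy_sine_determinant (n : ℕ) (hn : 1 ≤ n) (ψ φ : Fin n → ℝ)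
    (h : ∀ j l : Fin n, Real.sin ((ψ j - φ l) / 2) ≠ 0) :
    ((∏ j : Fin n, ∏ j' ∈ Finset.Ioi j, (Real.sin ((ψ j - ψ j') / 2)) ^ 2) *
        (∏ l : Fin n, ∏ l' ∈ Finset.Ioi l, (Real.sin ((φ l - φ l') / 2)) ^ 2)) /
      (∏ j : Fin n, ∏ l : Fin n, (Real.sin ((ψ j - φ l) / 2)) ^ 2)
    = (Matrix.det (Matrix.of fun j l : Fin n => 1 / Real.sin ((ψ j - φ l) / 2))) ^ 2 := by
  exact csd_aux n ψ φ h
end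

section
/- Let n ≥ 1 and let Ω ⊂ ℝⁿ × ℝⁿ be the open set of pairs (ψ, φ) = ((ψ_1,…,ψ_n),(φ_1,…,φ_n)) such that ψ_j − φ_l is not an integer multiple of 2π for all j, l. Define F : Ω → ℝ by F(ψ, φ) = det(A), where A is the n×n matrix with entries A_{jl} = 1/sin((ψ_j − φ_l)/2). Then for every integer k ≥ 1 and every point of Ω, ∑_{j=1}^{n} ∂^k F/∂ψ_j^k − (−1)^k ∑_{l=1}^{n} ∂^k F/∂φ_l^k = 0; i.e. F is annihilated by each of the radial operators D_k = ∑_j ∂^k/∂ψ_j^k − (−1)^k ∑_l ∂^k/∂φ_l^k. -/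
open Matrix

/-- The function `F(ψ, φ) = det(1/sin((ψ_j − φ_l)/2))` (the square root `J^{1/2}` of
Berezin's function for `m = n`). -/
noncomputable def sineDet (n : ℕ) (ψ φ : Fin n → ℝ) : ℝ :=
  Matrix.det (Matrix.of fun j l : Fin n => (Real.sin ((ψ j - φ l) / 2))⁻¹)

noncomputable def cscHalf (x : ℝ) : ℝ := (Real.sin (x / 2))⁻¹

theorem sineDet_row (n : ℕ) (ψ φ : Fin n → ℝ) (j : Fin n) (t : ℝ) :
    sineDet n (Function.update ψ j t) φ =
      ∑ l, (Matrix.of fun j l : Fin n => cscHalf (ψ j - φ l)).adjugate l j * cscHalf (t - φ l) := by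
  have h1 : sineDet n (Function.update ψ j t) φ =
      ((Matrix.of fun j l : Fin n => cscHalf (ψ j - φ l)).updateRow j
        (fun l => cscHalf (t - φ l))).det := by
    unfold sineDet
    congr 1
    ext a b
    by_cases hab : a = j
    · subst hab; simp [cscHalf]
    · simp [cscHalf, hab]
  rw [h1, ← Matrix.cramer_transpose_apply, Matrix.cramer_eq_adjugate_mulVec,
    ← Matrix.adjugate_transpose]
  simp [Matrix.mulVec, dotProduct]

theorem sineDet_col (n : ℕ) (ψ φ : Fin n → ℝ) (l : Fin n) (t : ℝ) :
    sineDet n ψ (Function.update φ l t) =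
      ∑ j, (Matrix.of fun j l : Fin n => cscHalf (ψ j - φ l)).adjugate l j * cscHalf (ψ j - t) := by
  have h1 : sineDet n ψ (Function.update φ l t) =
      ((Matrix.of fun j l : Fin n => cscHalf (ψ j - φ l)).updateCol l
        (fun j => cscHalf (ψ j - t))).det := by
    unfold sineDet
    congr 1
    ext a b
    by_cases hab : b = l
    · subst hab; simp [cscHalf]
    · simp [cscHalf, hab]
  rw [h1, ← Matrix.cramer_apply, Matrix.cramer_eq_adjugate_mulVec]
  simp [Matrix.mulVec, dotProduct]

theorem cscHalf_contDiffAt (k : ℕ) (x : ℝ) (h : ∀ m : ℤ, x ≠ 2 * Real.pi * (m : ℝ)) :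
    ContDiffAt ℝ k cscHalf x := by
  unfold cscHalf
  apply ContDiffAt.inv
  · fun_prop
  · intro h0
    obtain ⟨m, hm⟩ := Real.sin_eq_zero_iff.1 h0
    exact h m (by linarith)

/-- **First step in the proof of Corollary 3.12**: on the open set where no
`ψ_j − φ_l` is an integer multiple of `2π`, the function
`F(ψ,φ) = det(1/sin((ψ_j − φ_l)/2))` is annihilated by each radial operator
`D_k = ∑_j ∂^k/∂ψ_j^k − (−1)^k ∑_l ∂^k/∂φ_l^k`. -/
theorem sineDet_annihilated_by_Dk (n : ℕ) (hn : 1 ≤ n) (k : ℕ) (hk : 1 ≤ k)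
    (ψ φ : Fin n → ℝ)
    (h : ∀ j l : Fin n, ∀ m : ℤ, ψ j - φ l ≠ 2 * Real.pi * (m : ℝ)) :
    (∑ j : Fin n,
        iteratedDeriv k (fun t : ℝ => sineDet n (Function.update ψ j t) φ) (ψ j)) -
      (-1 : ℝ) ^ k *
        ∑ l : Fin n,
          iteratedDeriv k (fun t : ℝ => sineDet n ψ (Function.update φ l t)) (φ l)
    = 0 := by
  have hc : ∀ j l, ContDiffAt ℝ k cscHalf (ψ j - φ l) := fun j l =>
    cscHalf_contDiffAt k _ (h j l)
  have e1 : ∀ j, iteratedDeriv k (fun t : ℝ => sineDet n (Function.update ψ j t) φ) (ψ j) =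
      ∑ l, (Matrix.of fun j l : Fin n => cscHalf (ψ j - φ l)).adjugate l j *
        iteratedDeriv k cscHalf (ψ j - φ l) := by
    intro j
    simp only [sineDet_row]
    have hd : ∀ l, ContDiffAt ℝ k (fun t => cscHalf (t - φ l)) (ψ j) := fun l =>
      ContDiffAt.comp (g := cscHalf) (f := fun t => t - φ l) (ψ j) (hc j l) (by fun_prop)
    rw [iteratedDeriv_fun_sum (fun l _ => contDiffAt_const.mul (hd l))]
    refine Finset.sum_congr rfl fun l _ => ?_
    rw [iteratedDeriv_const_mul_field, iteratedDeriv_comp_sub_const]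
  have e2 : ∀ l, iteratedDeriv k (fun t : ℝ => sineDet n ψ (Function.update φ l t)) (φ l) =
      (-1 : ℝ) ^ k * ∑ j, (Matrix.of fun j l : Fin n => cscHalf (ψ j - φ l)).adjugate l j *
        iteratedDeriv k cscHalf (ψ j - φ l) := by
    intro l
    simp only [sineDet_col]
    have hd : ∀ j, ContDiffAt ℝ k (fun t => cscHalf (ψ j - t)) (φ l) := fun j =>
      ContDiffAt.comp (g := cscHalf) (f := fun t => ψ j - t) (φ l) (hc j l) (by fun_prop)
    rw [iteratedDeriv_fun_sum (fun j _ => contDiffAt_const.mul (hd j)), Finset.mul_sum]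
    refine Finset.sum_congr rfl fun j _ => ?_
    rw [iteratedDeriv_const_mul_field, iteratedDeriv_comp_const_sub]
    simp only [smul_eq_mul]
    ring
  simp only [e1, e2]
  rw [← Finset.mul_sum, ← mul_assoc, ← mul_pow, Finset.sum_comm]
  simp
end

section
/- The pseudo-unitary group U_{p,q} = {g an n×n complex matrix : g† s g = s} is contained in the closure of the semigroup H_{p,q} = {h an n×n complex matrix : s − h†sh is positive definite} within the space of n×n complex matrices. -/
open Matrix
open scoped ComplexOrder

/-- The pseudo-unitary group `U_{p,q} = {g : g†sg = s}` is contained in the closure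
of the semigroup `H_{p,q} = {h : s − h†sh > 0}`. -/
theorem pseudoUnitary_subset_closure_Hpq (p q : ℕ) (hp : 1 ≤ p) (hq : 1 ≤ q) :
    {g : Matrix (Fin (p + q)) (Fin (p + q)) ℂ | gᴴ * sMat p q * g = sMat p q} ⊆
      closure {h : Matrix (Fin (p + q)) (Fin (p + q)) ℂ |
        (sMat p q - hᴴ * sMat p q * h).PosDef} := by
  intro g hg
  have hg' : gᴴ * sMat p q * g = sMat p q := hg
  let v : ℝ → Fin (p + q) → ℂ := fun t i => if (i : ℕ) < p then ((1 - t : ℝ) : ℂ) else ((1 + t : ℝ) : ℂ)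
  have hv0 : g * Matrix.diagonal (v 0) = g := by
    have : v 0 = fun _ => 1 := by
      funext i
      simp [v]
    rw [this, Matrix.diagonal_one, mul_one]
  have hcont : Continuous (fun t : ℝ => g * Matrix.diagonal (v t)) := by
    refine continuous_const.matrix_mul (Continuous.matrix_diagonal ?_)
    refine continuous_pi fun i => ?_
    by_cases h : (i : ℕ) < p
    · simp only [v, h, if_true]
      fun_prop
    · simp only [v, h, if_false]
      fun_prop
  have ht : Filter.Tendsto (fun t : ℝ => g * Matrix.diagonal (v t)) (nhdsWithin 0 (Set.Ioi 0)) (nhds g) := by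
    have := (hcont.tendsto 0).mono_left (nhdsWithin_le_nhds (s := Set.Ioi (0 : ℝ)))
    simpa only [hv0] using this
  refine mem_closure_of_tendsto ht ?_
  filter_upwards [Ioo_mem_nhdsGT (zero_lt_one' ℝ)] with t ht
  obtain ⟨h0, h1⟩ := ht
  let w : Fin (p + q) → ℂ := fun i =>
    if (i : ℕ) < p then ((2 * t - t ^ 2 : ℝ) : ℂ) else ((2 * t + t ^ 2 : ℝ) : ℂ)
  have key : sMat p q - (g * Matrix.diagonal (v t))ᴴ * sMat p q * (g * Matrix.diagonal (v t))
      = Matrix.diagonal w := by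
    have e : (g * Matrix.diagonal (v t))ᴴ * sMat p q * (g * Matrix.diagonal (v t))
        = (Matrix.diagonal (v t))ᴴ * (gᴴ * sMat p q * g) * Matrix.diagonal (v t) := by
      rw [Matrix.conjTranspose_mul]
      simp only [Matrix.mul_assoc]
    rw [e, hg', sMat, Matrix.diagonal_conjTranspose, Matrix.diagonal_mul_diagonal,
      Matrix.diagonal_mul_diagonal, Matrix.diagonal_sub]
    congr 1
    funext i
    by_cases h : (i : ℕ) < p
    · simp [v, w, h]
      ring
    · simp [v, w, h]
      ring
  show (sMat p q - _).PosDef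
  rw [key]
  refine Matrix.PosDef.diagonal fun i => ?_
  by_cases h : (i : ℕ) < p
  · simp only [w, h, if_true]
    exact Complex.zero_lt_real.2 (by nlinarith)
  · simp only [w, h, if_false]
    exact Complex.zero_lt_real.2 (by nlinarith)
end
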